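/- arXiv:1803.10802 — 4 statements merged into one kernel-verified Lean document; each statement's English description precedes it below -/
import Mathlib

section
/- For every positive integer n, the 3-adic valuation of the sum of central binomial coefficients ∑_{k=0}^{n-1} C(2k,k) equals the 3-adic valuation of n² · C(2n,n). -/
/-- A power of `3` divided by a small enough positive integer is a 3-adic integer. -/
theorem aux_mem (j D : ℕ) (hD : 0 < D) (h : D < 3 ^ (j + 1)) :
    (3 : ℚ_[3]) ^ j / (D : ℚ_[3]) ∈ PadicInt.subring 3 := by
  obtain ⟨e, u, hu, rfl⟩ := Nat.exists_eq_pow_mul_and_not_dvd hD.ne' 3 (by norm_num)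
  have hu0 : 0 < u := Nat.pos_of_ne_zero (by rintro rfl; simp at hu)
  have he : e ≤ j := by
    have h1 : 3 ^ e < 3 ^ (j + 1) := lt_of_le_of_lt (Nat.le_mul_of_pos_right _ hu0) h
    have := (Nat.pow_lt_pow_iff_right (by norm_num : 1 < 3)).1 h1
    omega
  obtain ⟨d, rfl⟩ := Nat.exists_eq_add_of_le he
  have hu1 : ‖(u : ℚ_[3])‖ = 1 := by
    rw [Padic.norm_natCast_eq_one_iff]
    exact (Nat.Prime.coprime_iff_not_dvd Nat.prime_three).2 hu
  have hune : (u : ℚ_[3]) ≠ 0 := by exact_mod_cast hu0.ne'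
  have heq : (3 : ℚ_[3]) ^ (e + d) / ((3 ^ e * u : ℕ) : ℚ_[3]) = (3 ^ d : ℚ_[3]) * (u : ℚ_[3])⁻¹ := by
    push_cast
    field_simp
    ring
  rw [heq]
  refine mul_mem (pow_mem (ofNat_mem _ 3) _) ?_
  rw [PadicInt.mem_subring_iff, norm_inv, hu1]
  norm_num

/-- The truncated integral of `(1 + 3 x ^ 2) ^ m`. -/
noncomputable def auxU (J m : ℕ) : ℚ_[3] :=
  ∑ j ∈ Finset.range J, (m.choose j : ℚ_[3]) * 3 ^ j / (2 * j + 1)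

theorem aux_odd_ne (j : ℕ) : (2 * (j : ℚ_[3]) + 1) ≠ 0 := by
  exact_mod_cast (Nat.succ_ne_zero (2 * j))

theorem aux_four_pow (J m : ℕ) (h : m < J) :
    ∑ j ∈ Finset.range J, (m.choose j : ℚ_[3]) * 3 ^ j = 4 ^ m := by
  have h4 : (4 : ℚ_[3]) = 3 + 1 := by norm_num
  rw [h4, add_pow]
  symm
  rw [← Finset.sum_subset (Finset.range_subset_range.2 (Nat.succ_le_of_lt h))]
  · refine Finset.sum_congr rfl fun j _ => ?_
    ring
  · intro j _ hj
    rw [Nat.choose_eq_zero_of_lt (by simpa using hj)]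
    simp

theorem aux_rec (J m : ℕ) (h : m + 1 < J) :
    (2 * (m : ℚ_[3]) + 3) * auxU J (m + 1) = 2 * (m + 1) * auxU J m + 4 ^ (m + 1) := by
  rw [← aux_four_pow J (m + 1) h, auxU, auxU, Finset.mul_sum, Finset.mul_sum,
    ← Finset.sum_add_distrib]
  refine Finset.sum_congr rfl fun j _ => ?_
  have hne := aux_odd_ne j
  have key : (m.choose j : ℚ_[3]) * (m + 1) = ((m + 1).choose j : ℚ_[3]) * (m + 1 - j) := by
    rcases le_or_gt j (m + 1) with hj | hj
    · have := Nat.choose_mul_succ_eq m j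
      have h2 : ((m + 1 - j : ℕ) : ℚ_[3]) = m + 1 - j := by
        rw [Nat.cast_sub hj]; push_cast; ring
      rw [← h2]
      exact_mod_cast this
    · rw [Nat.choose_eq_zero_of_lt hj, Nat.choose_eq_zero_of_lt (by omega : m < j)]
      simp
  field_simp
  linear_combination (-2) * key

theorem aux_main (J m : ℕ) (h : m < J) :
    (∑ k ∈ Finset.range (m + 1), (Nat.centralBinom k : ℚ_[3])) * 4 ^ (m + 1) =
      2 * Nat.centralBinom (m + 1) * (m + 1) * auxU J m := by
  induction m with
  | zero =>
    have : auxU J 0 = 1 := by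
      rw [auxU, Finset.sum_eq_single 0]
      · simp
      · intro j _ hj
        rw [Nat.choose_eq_zero_of_lt (by omega)]
        simp
      · intro h0
        simp at h0
        omega
    rw [this]
    simp [Nat.centralBinom]
    norm_num
  | succ m ih =>
    have ih := ih (by omega)
    have hr := aux_rec J m h
    have hc : ((m : ℚ_[3]) + 1 + 1) * (Nat.centralBinom (m + 1 + 1)) =
        2 * (2 * (m + 1) + 1) * Nat.centralBinom (m + 1) := by
      exact_mod_cast Nat.succ_mul_centralBinom_succ (m + 1)
    rw [Finset.sum_range_succ, add_mul, pow_succ 4 (m + 1)]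
    push_cast
    linear_combination 4 * ih - 4 * (Nat.centralBinom (m + 1) : ℚ_[3]) * hr
      - 2 * auxU J (m + 1) * hc

theorem aux_alt (m j : ℕ) : (-1 : ℚ_[3]) ^ j * m.choose j =
    1 + (m + 1) * ∑ i ∈ Finset.range j, (-1) ^ (i + 1) * (m.choose i : ℚ_[3]) / (i + 1) := by
  induction j with
  | zero => simp
  | succ j ih =>
    rw [Finset.sum_range_succ, mul_add, ← add_assoc, ← ih]
    have h1 : ((m + 1 : ℚ_[3])) * m.choose j = (m.choose j + m.choose (j + 1)) * (j + 1) := by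
      have := Nat.add_one_mul_choose_eq m j
      rw [Nat.choose_succ_succ] at this
      exact_mod_cast this
    have h0 : (j : ℚ_[3]) + 1 ≠ 0 := by exact_mod_cast Nat.succ_ne_zero j
    field_simp
    rw [pow_succ]
    linear_combination ((-1) ^ j) * h1

/-- The truncated series whose 3-adic limit is zero. -/
noncomputable def auxE (J : ℕ) : ℚ_[3] :=
  ∑ j ∈ Finset.range J, (-3 : ℚ_[3]) ^ j / (2 * j + 1)

theorem aux_bound1 (j : ℕ) : (2 * j + 2) * (2 * j + 3) < 3 ^ (j + 2) := by
  induction j with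
  | zero => norm_num
  | succ j ih => rw [pow_succ]; nlinarith

theorem aux_bound2 (j : ℕ) : (j + 3) * (2 * j + 7) < 3 ^ (j + 3) := by
  induction j with
  | zero => norm_num
  | succ j ih => rw [pow_succ]; nlinarith

theorem aux_term1 (i j : ℕ) (h : i < 2 * j) :
    (3 : ℚ_[3]) ^ j / (((i + 1) * (2 * j + 1) : ℕ) : ℚ_[3]) ∈ PadicInt.subring 3 := by
  refine aux_mem _ _ (by positivity) ?_
  obtain ⟨j, rfl⟩ : ∃ k, j = k + 1 := ⟨j - 1, by omega⟩
  refine lt_of_le_of_lt ?_ (aux_bound1 j)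
  exact Nat.mul_le_mul (by omega) (by omega)

theorem aux_term2 (i j : ℕ) (h : i < j + 2) :
    (3 : ℚ_[3]) ^ (j + 1) / (((i + 1) * (2 * (j + 2) + 1) : ℕ) : ℚ_[3]) ∈
      PadicInt.subring 3 := by
  rcases j with _ | j
  · have h10 : ‖((10 : ℕ) : ℚ_[3])‖ = 1 := by
      rw [Padic.norm_natCast_eq_one_iff]
      norm_num
    have hi : i = 0 ∨ i = 1 := by omega
    rcases hi with rfl | rfl
    · exact aux_mem 1 5 (by norm_num) (by norm_num)
    · have hinv : ((10 : ℕ) : ℚ_[3])⁻¹ ∈ PadicInt.subring 3 := by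
        rw [PadicInt.mem_subring_iff, norm_inv, h10]
        norm_num
      have := mul_mem (pow_mem (ofNat_mem (PadicInt.subring 3) 3) 1) hinv
      rw [← div_eq_mul_inv] at this
      exact this
  · refine aux_mem _ _ (by positivity) ?_
    refine lt_of_le_of_lt ?_ (aux_bound2 j)
    exact Nat.mul_le_mul (by omega) (by omega)

/-- Imaginary and real parts of `(1 + √-3) ^ N`. -/
noncomputable def auxA (J N : ℕ) : ℚ_[3] :=
  ∑ j ∈ Finset.range J, (N.choose (2 * j + 1) : ℚ_[3]) * (-3) ^ j

/-- The real part. -/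
noncomputable def auxB (J N : ℕ) : ℚ_[3] :=
  ∑ j ∈ Finset.range (J + 1), (N.choose (2 * j) : ℚ_[3]) * (-3) ^ j

theorem auxA_succ (J N : ℕ) (h : N < 2 * J) :
    auxA J (N + 1) = auxA J N + auxB J N := by
  rw [auxA, auxA, auxB, Finset.sum_range_succ _ J, Nat.choose_eq_zero_of_lt h]
  rw [Nat.cast_zero, zero_mul, add_zero, ← Finset.sum_add_distrib]
  refine Finset.sum_congr rfl fun j _ => ?_
  rw [Nat.choose_succ_succ]
  push_cast
  ring

theorem auxB_succ (J N : ℕ) :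
    auxB J (N + 1) = auxB J N - 3 * auxA J N := by
  rw [auxB, auxB, auxA, Finset.sum_range_succ' _ J, Finset.sum_range_succ' _ J, Finset.mul_sum]
  have : ∀ j ∈ Finset.range J, ((N + 1).choose (2 * (j + 1)) : ℚ_[3]) * (-3) ^ (j + 1) =
      (N.choose (2 * (j + 1)) : ℚ_[3]) * (-3) ^ (j + 1) -
        3 * ((N.choose (2 * j + 1) : ℚ_[3]) * (-3) ^ j) := by
    intro j _
    have h2 : 2 * (j + 1) = 2 * j + 1 + 1 := by ring
    rw [h2, Nat.choose_succ_succ]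
    push_cast
    ring
  rw [Finset.sum_congr rfl this, Finset.sum_sub_distrib]
  simp
  ring

theorem auxA_zero (J k : ℕ) (h : 3 * k ≤ 2 * J) : auxA J (3 * k) = 0 := by
  induction k with
  | zero => simp [auxA]
  | succ k ih =>
    have ih := ih (by omega)
    have h1 := auxA_succ J (3 * k) (by omega)
    have h2 := auxA_succ J (3 * k + 1) (by omega)
    have h3 := auxA_succ J (3 * k + 2) (by omega)
    have g1 := auxB_succ J (3 * k)
    have g2 := auxB_succ J (3 * k + 1)
    have : 3 * (k + 1) = 3 * k + 2 + 1 := by ring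
    rw [this, h3, h2, g2, h1, g1, ih]
    ring

/-- The logarithm of a root of unity vanishes, truncated version. -/
theorem auxE_eq (J m k : ℕ) (hm : m + 1 = 3 * k) (h : m + 1 ≤ 2 * J) :
    ∃ r ∈ PadicInt.subring 3, auxE J = (m + 1) * r := by
  have hA := auxA_zero J k (by omega)
  rw [← hm, auxA] at hA
  have hm0 : (m : ℚ_[3]) + 1 ≠ 0 := by exact_mod_cast Nat.succ_ne_zero m
  have h0 : ∑ j ∈ Finset.range J, (m.choose (2 * j) : ℚ_[3]) * (-3) ^ j / (2 * j + 1) = 0 := by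
    have : (m + 1 : ℚ_[3]) *
        ∑ j ∈ Finset.range J, (m.choose (2 * j) : ℚ_[3]) * (-3) ^ j / (2 * j + 1) = 0 := by
      rw [← hA, Finset.mul_sum]
      refine Finset.sum_congr rfl fun j _ => ?_
      have hne := aux_odd_ne j
      have h1 : ((m + 1 : ℚ_[3])) * m.choose (2 * j) =
          (m + 1).choose (2 * j + 1) * (2 * j + 1) := by
        exact_mod_cast Nat.add_one_mul_choose_eq m (2 * j)
      field_simp
      linear_combination h1
    exact (mul_eq_zero.1 this).resolve_left hm0
  refine ⟨-∑ j ∈ Finset.range J, ∑ i ∈ Finset.range (2 * j),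
    ((-1) ^ j * (-1) ^ (i + 1) * (m.choose i : ℚ_[3])) *
      ((3 : ℚ_[3]) ^ j / (((i + 1) * (2 * j + 1) : ℕ) : ℚ_[3])), ?_, ?_⟩
  · refine neg_mem (sum_mem fun j _ => sum_mem fun i hi => mul_mem (mul_mem (mul_mem ?_ ?_) ?_) ?_)
    · exact pow_mem (neg_mem (one_mem _)) _
    · exact pow_mem (neg_mem (one_mem _)) _
    · exact natCast_mem _ _
    · exact aux_term1 i j (Finset.mem_range.1 hi)
  · rw [eq_comm, mul_neg, neg_eq_iff_add_eq_zero, ← h0, auxE, Finset.mul_sum,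
      ← Finset.sum_add_distrib]
    refine Finset.sum_congr rfl fun j _ => ?_
    have hne := aux_odd_ne j
    have ha := aux_alt m (2 * j)
    rw [pow_mul, neg_one_sq, one_pow, one_mul] at ha
    have hsplit : ∀ M X c d : ℚ_[3], (1 + M * X) * c / d = M * (X * c / d) + c / d := by
      intro M X c d
      ring
    rw [ha, hsplit]
    congr 2
    rw [Finset.sum_mul, Finset.sum_div]
    refine Finset.sum_congr rfl fun i _ => ?_
    have hi : (i : ℚ_[3]) + 1 ≠ 0 := by exact_mod_cast Nat.succ_ne_zero i
    rw [neg_pow 3 j]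
    push_cast
    field_simp

theorem auxU_eq (J m : ℕ) :
    ∃ r ∈ PadicInt.subring 3, auxU (J + 2) m = auxE (J + 2) + (m + 1) * (1 + 3 * r) := by
  refine ⟨∑ j ∈ Finset.range J, ∑ i ∈ Finset.range (j + 2),
    ((-1) ^ j * (-1) ^ (i + 1) * (m.choose i : ℚ_[3])) *
      ((3 : ℚ_[3]) ^ (j + 1) / (((i + 1) * (2 * (j + 2) + 1) : ℕ) : ℚ_[3])), ?_, ?_⟩
  · refine sum_mem fun j _ => sum_mem fun i hi => mul_mem (mul_mem (mul_mem ?_ ?_) ?_) ?_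
    · exact pow_mem (neg_mem (one_mem _)) _
    · exact pow_mem (neg_mem (one_mem _)) _
    · exact natCast_mem _ _
    · exact aux_term2 i j (Finset.mem_range.1 hi)
  · have hterm : ∀ j : ℕ, (m.choose j : ℚ_[3]) * 3 ^ j / (2 * j + 1) =
        (-3) ^ j / (2 * j + 1) + (m + 1) * ((-3) ^ j / (2 * j + 1) *
          ∑ i ∈ Finset.range j, (-1) ^ (i + 1) * (m.choose i : ℚ_[3]) / (i + 1)) := by
      intro j
      have hs : (-1 : ℚ_[3]) ^ j * (-1) ^ j = 1 := by rw [← mul_pow]; simp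
      have e : (m.choose j : ℚ_[3]) * 3 ^ j / (2 * j + 1) =
          (-3) ^ j / (2 * j + 1) * ((-1) ^ j * m.choose j) := by
        rw [neg_pow 3 j]
        linear_combination (-(m.choose j : ℚ_[3]) * 3 ^ j / (2 * j + 1)) * hs
      rw [e, aux_alt]
      ring
    rw [auxU, Finset.sum_congr rfl fun j _ => hterm j, Finset.sum_add_distrib, ← auxE,
      ← Finset.mul_sum]
    congr 2
    rw [Finset.sum_range_succ', Finset.sum_range_succ']
    have h1 : (-3 : ℚ_[3]) ^ (0 + 1) / (2 * ((0 + 1 : ℕ) : ℚ_[3]) + 1) *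
          ∑ i ∈ Finset.range (0 + 1), (-1) ^ (i + 1) * (m.choose i : ℚ_[3]) / (i + 1) = 1 := by
      simp
      norm_num
    rw [h1]
    simp only [Finset.range_zero, Finset.sum_empty, mul_zero, add_zero]
    rw [add_comm, Finset.mul_sum]
    congr 1
    refine Finset.sum_congr rfl fun j _ => ?_
    rw [Finset.mul_sum, Finset.mul_sum]
    refine Finset.sum_congr rfl fun i _ => ?_
    have hi : (i : ℚ_[3]) + 1 ≠ 0 := by exact_mod_cast Nat.succ_ne_zero i
    have hne := aux_odd_ne (j + 2)
    rw [neg_pow 3 (j + 1 + 1)]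
    push_cast at hne ⊢
    have h2 : 2 * ((j : ℚ_[3]) + 1 + 1) + 1 ≠ 0 := by
      intro h
      apply hne
      rw [← h]
      ring
    have h3 : (j : ℚ_[3]) + 1 + 1 = j + 2 := by ring
    rw [h3]
    field_simp
    ring

theorem auxU_final (m : ℕ) :
    ∃ J r, m < J ∧ r ∈ PadicInt.subring 3 ∧ auxU J m = (m + 1) * (1 + 3 * r) := by
  have hlt : m + 1 < 3 ^ (m + 1) := Nat.lt_pow_self (by norm_num)
  obtain ⟨J, hJ⟩ : ∃ J, 3 ^ (m + 1) = J + 2 := ⟨3 ^ (m + 1) - 2, by omega⟩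
  obtain ⟨r, hr, h1⟩ := auxU_eq J m
  obtain ⟨s, hs, h2⟩ := auxE_eq (J + 2) (J + 1) (3 ^ m) (by rw [← pow_succ']; omega) (by omega)
  have hm0 : (m : ℚ_[3]) + 1 ≠ 0 := by exact_mod_cast Nat.succ_ne_zero m
  have ht := aux_mem m (m + 1) (by omega) hlt
  have hJ' : ((J + 1 : ℕ) : ℚ_[3]) + 1 = 3 ^ (m + 1) := by
    have : ((3 ^ (m + 1) : ℕ) : ℚ_[3]) = ((J + 2 : ℕ) : ℚ_[3]) := by rw [hJ]
    push_cast at this ⊢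
    rw [this]
    ring
  refine ⟨J + 2, r + 3 ^ m / ((m + 1 : ℕ) : ℚ_[3]) * s, by omega,
    add_mem hr (mul_mem ht hs), ?_⟩
  rw [h1, h2, hJ']
  push_cast
  field_simp
  ring

theorem aux_norm (r : ℚ_[3]) (hr : r ∈ PadicInt.subring 3) : ‖1 + 3 * r‖ = 1 := by
  rw [PadicInt.mem_subring_iff] at hr
  have h3 : ‖(3 : ℚ_[3])‖ < 1 := by exact_mod_cast Padic.norm_p_lt_one (p := 3)
  have h1 : ‖(1 + 3 * r) - 1‖ < ‖(1 : ℚ_[3])‖ := by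
    rw [add_sub_cancel_left, norm_mul, norm_one]
    nlinarith [norm_nonneg r, norm_nonneg (3 : ℚ_[3])]
  rw [Padic.norm_eq_of_norm_sub_lt_right h1, norm_one]

/-- For every positive integer `n`, the 3-adic valuation of `∑_{k=0}^{n-1} C(2k,k)`
equals the 3-adic valuation of `n² · C(2n,n)`. -/
theorem stmt_0 (n : ℕ) (hn : 0 < n) :
    padicValNat 3 (∑ k ∈ Finset.range n, Nat.choose (2 * k) k) =
      padicValNat 3 (n ^ 2 * Nat.choose (2 * n) n) := by
  obtain ⟨m, rfl⟩ : ∃ m, n = m + 1 := ⟨n - 1, by omega⟩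
  obtain ⟨J, r, hJ, hr, hU⟩ := auxU_final m
  have hmain := aux_main J m hJ
  simp only [← Nat.centralBinom_eq_two_mul_choose]
  set S := ∑ k ∈ Finset.range (m + 1), Nat.centralBinom k with hS
  have hS' : (∑ k ∈ Finset.range (m + 1), (Nat.centralBinom k : ℚ_[3])) = (S : ℚ_[3]) := by
    rw [hS]; push_cast; rfl
  have hS0 : S ≠ 0 := by
    rw [hS, Finset.sum_range_succ']
    simp
  have h4 : ‖(4 : ℚ_[3])‖ = 1 := by
    have := (Padic.norm_natCast_eq_one_iff (p := 3) (n := 4)).2 (by norm_num)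
    exact_mod_cast this
  have h2 : ‖(2 : ℚ_[3])‖ = 1 := by
    have := (Padic.norm_natCast_eq_one_iff (p := 3) (n := 2)).2 (by norm_num)
    exact_mod_cast this
  have hne : (m + 1) ^ 2 * Nat.centralBinom (m + 1) ≠ 0 :=
    mul_ne_zero (by positivity) (Nat.centralBinom_ne_zero _)
  have hnorm : ‖(S : ℚ_[3])‖ = ‖(((m + 1) ^ 2 * Nat.centralBinom (m + 1) : ℕ) : ℚ_[3])‖ := by
    have := congrArg norm hmain
    rw [hS', hU] at this
    simp only [norm_mul, norm_pow, h4, h2, aux_norm r hr, one_pow, mul_one, one_mul] at this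
    rw [this]
    push_cast
    simp only [norm_mul, norm_pow]
    ring
  rw [Padic.norm_eq_zpow_neg_valuation (by exact_mod_cast hS0),
    Padic.norm_eq_zpow_neg_valuation (by exact_mod_cast hne),
    Padic.valuation_natCast, Padic.valuation_natCast] at hnorm
  have := zpow_right_injective₀ (by norm_num) (by norm_num) hnorm
  simpa using this
end

section
/- For every positive integer n, the rational number (∑_{k=0}^{n-1} C(2k,k)) / (n² C(2n,n)) is a 3-adic integer congruent to -1 mod 3, i.e. its 3-adic valuation is 0 and its reduction mod 3 is 2. -/
open Filter Topology

/-- The double factorial product `1 * 3 * ... * (2k-1)` shifted by `2n`. -/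
def nn15 (n : ℤ) (k : ℕ) : ℤ := ∏ j ∈ Finset.range k, (2 * n + (2 * j + 1))

theorem nn15_succ (n : ℤ) (k : ℕ) : nn15 n (k + 1) = nn15 n k * (2 * n + (2 * k + 1)) := by
  simp [nn15, Finset.prod_range_succ]

theorem nn15_shift (n : ℤ) (k : ℕ) :
    nn15 (n + 1) k * (2 * n + 1) = nn15 n k * (2 * n + 1 + 2 * k) := by
  induction k with
  | zero => simp [nn15]
  | succ k ih =>
    rw [nn15_succ, nn15_succ]
    push_cast
    linear_combination (2 * (n + 1) + (2 * (k : ℤ) + 1)) * ih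

theorem nn15_dvd (n : ℤ) (k : ℕ) : n ∣ nn15 n k - nn15 0 k := by
  induction k with
  | zero => simp [nn15]
  | succ k ih =>
    obtain ⟨c, hc⟩ := ih
    rw [nn15_succ, nn15_succ]
    exact ⟨c * (2 * k + 1) + 2 * nn15 n k, by linear_combination (2 * (k : ℤ) + 1) * hc⟩

theorem nn15_zero_pos (k : ℕ) : 0 < nn15 0 k := by
  unfold nn15
  apply Finset.prod_pos
  intro i _
  positivity

theorem nn15_fact (k : ℕ) : nn15 0 k * (2 ^ k * k.factorial) = (2 * k).factorial := by
  induction k with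
  | zero => simp [nn15]
  | succ k ih =>
    rw [nn15_succ, show 2 * (k + 1) = 2 * k + 1 + 1 by ring, Nat.factorial_succ,
      Nat.factorial_succ, Nat.factorial_succ]
    push_cast
    rw [← ih]
    ring

theorem norm_three15 : ‖(3 : ℚ_[3])‖ = 3⁻¹ := by
  have := @Padic.norm_p 3 _
  exact_mod_cast this

theorem norm_fact15 (k m : ℕ) (hm : m ≤ 2 * k + 1) :
    ‖(3 : ℚ_[3]) ^ k / (m.factorial : ℚ_[3])‖ ≤ 1 := by
  have h1 : padicValNat 3 m.factorial ≤ k := by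
    rcases Nat.eq_zero_or_pos m with rfl | hpos
    · simp
    have h := @sub_one_mul_padicValNat_factorial_lt_of_ne_zero 3 _ m (by omega)
    omega
  have h2 : (m.factorial : ℚ_[3]) ≠ 0 := by exact_mod_cast m.factorial_ne_zero
  rw [norm_div, norm_pow, norm_three15, Padic.norm_eq_zpow_neg_valuation h2, Padic.valuation_natCast]
  rw [div_le_one (by positivity)]
  rw [← zpow_natCast, inv_zpow, ← zpow_neg]
  apply zpow_le_zpow_right₀ (by norm_num)
  omega

/-- main norm bound -/
theorem norm_D15 (k : ℕ) :
    ‖(-3 : ℚ_[3]) ^ k / (nn15 0 (k + 1) : ℚ_[3])‖ ≤ ‖(k.factorial : ℚ_[3])‖ := by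
  have hD : (nn15 0 k : ℚ_[3]) * (2 ^ k * k.factorial) = (2 * k).factorial := by
    exact_mod_cast congrArg (Int.cast : ℤ → ℚ_[3]) (nn15_fact k)
  have hD0 : (nn15 0 k : ℚ_[3]) ≠ 0 := by exact_mod_cast (nn15_zero_pos k).ne'
  have e : (-3 : ℚ_[3]) ^ k / (nn15 0 (k + 1) : ℚ_[3]) =
      ((3 : ℚ_[3]) ^ k / ((2 * k + 1).factorial : ℚ_[3])) * (((-2) ^ k : ℤ) : ℚ_[3])
        * (k.factorial : ℚ_[3]) := by
    rw [nn15_succ, Nat.factorial_succ]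
    push_cast
    rw [← hD]
    have h1 : (2 * (k : ℚ_[3]) + 1) ≠ 0 := by exact_mod_cast (by omega : 2 * k + 1 ≠ 0)
    have h2 : (k.factorial : ℚ_[3]) ≠ 0 := by exact_mod_cast k.factorial_ne_zero
    rw [show (-3 : ℚ_[3]) = (-1) * 3 by norm_num, show (-2 : ℚ_[3]) = (-1) * 2 by norm_num,
      mul_pow, mul_pow]
    simp only [mul_zero, zero_add]
    field_simp
  rw [e, norm_mul, norm_mul]
  have a := norm_fact15 k (2 * k + 1) le_rfl
  have b := Padic.norm_int_le_one (p := 3) ((-2) ^ k)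
  calc _ ≤ 1 * 1 * ‖(k.factorial : ℚ_[3])‖ := by gcongr
    _ = _ := by ring

theorem tend_fact15 : Tendsto (fun k : ℕ => ‖(k.factorial : ℚ_[3])‖) atTop (𝓝 0) := by
  rw [Metric.tendsto_atTop]
  intro ε hε
  obtain ⟨m, hm⟩ := exists_pow_lt_of_lt_one hε (by norm_num : (3 : ℝ)⁻¹ < 1)
  refine ⟨3 ^ m, fun k hk => ?_⟩
  obtain ⟨c, hc⟩ := Nat.dvd_factorial (by positivity) hk
  simp only [dist_zero_right, norm_norm, hc]
  push_cast
  rw [norm_mul, norm_pow, norm_three15]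
  have b := Padic.norm_int_le_one (p := 3) c
  rw [Int.cast_natCast] at b
  calc _ ≤ (3 : ℝ)⁻¹ ^ m * 1 := by gcongr
    _ < ε := by linarith

/-- partial sums -/
noncomputable def GG15 (n : ℕ) (K : ℕ) : ℚ_[3] :=
  2 * n * ∑ k ∈ Finset.range K, (-3 : ℚ_[3]) ^ k / (nn15 0 (k + 1) : ℚ_[3]) * (nn15 n k : ℚ_[3])

theorem GG15_rec (n K : ℕ) :
    2 * (2 * n + 1) * GG15 (n + 1) K =
      (n + 1) * (GG15 n K + 1 - (-3 : ℚ_[3]) ^ K / (nn15 0 K : ℚ_[3]) * (nn15 n K : ℚ_[3])) := by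
  induction K with
  | zero => simp [GG15, nn15]
  | succ K ih =>
    have hD0 : (nn15 0 K : ℚ_[3]) ≠ 0 := by exact_mod_cast (nn15_zero_pos K).ne'
    have h1 : (2 * (K : ℚ_[3]) + 1) ≠ 0 := by exact_mod_cast (by omega : 2 * K + 1 ≠ 0)
    have hs : (nn15 (n + 1) K : ℚ_[3]) * (2 * n + 1) = nn15 n K * (2 * n + 1 + 2 * K) := by
      exact_mod_cast congrArg (Int.cast : ℤ → ℚ_[3]) (nn15_shift n K)
    have A : ∀ m : ℕ, GG15 m (K + 1) = GG15 m K + 2 * m * ((-3 : ℚ_[3]) ^ K /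
        (nn15 0 (K + 1) : ℚ_[3]) * (nn15 m K : ℚ_[3])) := by
      intro m
      unfold GG15
      rw [Finset.sum_range_succ, mul_add]
    rw [A, A]
    have step : 2 * (2 * n + 1) * (2 * ((n + 1 : ℕ) : ℚ_[3]) * ((-3 : ℚ_[3]) ^ K /
        (nn15 0 (K + 1) : ℚ_[3]) * (nn15 ((n + 1 : ℕ) : ℤ) K : ℚ_[3]))) =
        (n + 1) * (2 * n * ((-3 : ℚ_[3]) ^ K / (nn15 0 (K + 1) : ℚ_[3]) * (nn15 n K : ℚ_[3]))
        + (-3 : ℚ_[3]) ^ K / (nn15 0 K : ℚ_[3]) * (nn15 n K : ℚ_[3])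
        - (-3 : ℚ_[3]) ^ (K + 1) / (nn15 0 (K + 1) : ℚ_[3]) * (nn15 n (K + 1) : ℚ_[3])) := by
      simp only [nn15_succ]
      push_cast
      simp only [mul_zero, zero_add, pow_succ]
      field_simp
      linear_combination 4 * hs
    linear_combination ih + step

/-- the target ratio -/
noncomputable def gg15 (n : ℕ) : ℚ_[3] :=
  (∑ k ∈ Finset.range n, (Nat.choose (2 * k) k : ℚ_[3])) / (Nat.choose (2 * n) n : ℚ_[3])

theorem gg15_rec (n : ℕ) : 2 * (2 * n + 1) * gg15 (n + 1) = (n + 1) * (gg15 n + 1) := by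
  have h : ((n : ℚ_[3]) + 1) * (Nat.choose (2 * (n + 1)) (n + 1) : ℚ_[3]) =
      2 * (2 * n + 1) * (Nat.choose (2 * n) n : ℚ_[3]) := by
    exact_mod_cast Nat.succ_mul_centralBinom_succ n
  have h0 : (Nat.choose (2 * n) n : ℚ_[3]) ≠ 0 := by
    exact_mod_cast Nat.centralBinom_ne_zero n
  have h1 : (Nat.choose (2 * (n + 1)) (n + 1) : ℚ_[3]) ≠ 0 := by
    exact_mod_cast Nat.centralBinom_ne_zero (n + 1)
  unfold gg15
  rw [Finset.sum_range_succ]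
  field_simp
  linear_combination (-((∑ k ∈ Finset.range n, (Nat.choose (2 * k) k : ℚ_[3])) +
    (Nat.choose (2 * n) n : ℚ_[3]))) * h

theorem tend_U15 (n : ℕ) :
    Tendsto (fun K => (-3 : ℚ_[3]) ^ K / (nn15 0 K : ℚ_[3]) * (nn15 n K : ℚ_[3])) atTop (𝓝 0) := by
  apply squeeze_zero_norm _ tend_fact15
  intro K
  have e : (-3 : ℚ_[3]) ^ K / (nn15 0 K : ℚ_[3]) * (nn15 n K : ℚ_[3]) =
    (-3 : ℚ_[3]) ^ K / (nn15 0 (K + 1) : ℚ_[3]) * ((nn15 n K * (2 * K + 1) : ℤ) : ℚ_[3]) := by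
    have hD0 : (nn15 0 K : ℚ_[3]) ≠ 0 := by exact_mod_cast (nn15_zero_pos K).ne'
    have h1 : (2 * (K : ℚ_[3]) + 1) ≠ 0 := by exact_mod_cast (by omega : 2 * K + 1 ≠ 0)
    rw [nn15_succ]
    push_cast
    simp only [mul_zero, zero_add]
    field_simp
  rw [e, norm_mul]
  have a := norm_D15 K
  have b := Padic.norm_int_le_one (p := 3) (nn15 n K * (2 * K + 1))
  calc _ ≤ ‖(K.factorial : ℚ_[3])‖ * 1 := by gcongr
    _ = _ := by ring

theorem tend_GG15 (n : ℕ) : Tendsto (GG15 n) atTop (𝓝 (gg15 n)) := by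
  induction n with
  | zero =>
    have : GG15 0 = fun _ => 0 := by funext K; simp [GG15]
    rw [this]
    simp [gg15]
  | succ n ih =>
    have h1 : (2 * (2 * (n : ℚ_[3]) + 1)) ≠ 0 := by
      exact_mod_cast (by omega : 2 * (2 * n + 1) ≠ 0)
    have e : gg15 (n + 1) = (n + 1) * (gg15 n + 1 - 0) / (2 * (2 * n + 1)) := by
      rw [eq_div_iff h1]; linear_combination gg15_rec n
    have e2 : GG15 (n + 1) = fun K => (n + 1) * (GG15 n K + 1 -
        (-3 : ℚ_[3]) ^ K / (nn15 0 K : ℚ_[3]) * (nn15 n K : ℚ_[3])) / (2 * (2 * n + 1)) := by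
      funext K
      rw [eq_div_iff h1]; linear_combination GG15_rec n K
    rw [e, e2]
    exact (((ih.add_const 1).sub (tend_U15 n)).const_mul _).div_const _

theorem split15 {R : Type*} [AddCommMonoid R] (f : ℕ → R) (K : ℕ) :
    ∑ i ∈ Finset.range (2 * K), f i = ∑ k ∈ Finset.range K, (f (2 * k) + f (2 * k + 1)) := by
  induction K with
  | zero => simp
  | succ K ih =>
    rw [show 2 * (K + 1) = 2 * K + 1 + 1 by ring, Finset.sum_range_succ, Finset.sum_range_succ,
      Finset.sum_range_succ, ih, add_assoc]

theorem im15 (M : ℕ) (hM : 0 < M) :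
    ((1 + Zsqrtd.sqrtd : ℤ√(-3)) ^ M).im = ∑ k ∈ Finset.range M, (M.choose (2 * k + 1) : ℤ) * (-3) ^ k := by
  have hs : ∀ k, (Zsqrtd.sqrtd : ℤ√(-3)) ^ (2 * k) = (((-3) ^ k : ℤ) : ℤ√(-3)) := by
    intro k
    rw [pow_mul, pow_two, Zsqrtd.dmuld]
    push_cast
    rfl
  have : (1 + Zsqrtd.sqrtd : ℤ√(-3)) ^ M =
      ∑ i ∈ Finset.range (2 * M), (Zsqrtd.sqrtd : ℤ√(-3)) ^ i * (M.choose i : ℤ√(-3)) := by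
    rw [add_comm, add_pow]
    simp only [one_pow, mul_one]
    apply Finset.sum_subset
    · intro i hi
      simp at hi ⊢
      omega
    · intro i _ hi
      simp at hi
      rw [Nat.choose_eq_zero_of_lt (by omega)]
      simp
  rw [this, split15]
  have him : ∀ (s : Finset ℕ) (f : ℕ → ℤ√(-3)), (∑ i ∈ s, f i).im = ∑ i ∈ s, (f i).im := by
    intro s f
    classical
    induction s using Finset.induction_on with
    | empty => simp
    | insert a s ha ih => rw [Finset.sum_insert ha, Finset.sum_insert ha, Zsqrtd.im_add, ih]
  rw [him]
  apply Finset.sum_congr rfl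
  intro k _
  rw [pow_succ, hs]
  generalize ((-3 : ℤ) ^ k) = x
  simp
  ring

theorem sum_zero15 (t : ℕ) (ht : 0 < t) :
    ∑ k ∈ Finset.range (3 * t), ((3 * t).choose (2 * k + 1) : ℤ) * (-3) ^ k = 0 := by
  rw [← im15 _ (by omega), pow_mul]
  have : (1 + Zsqrtd.sqrtd : ℤ√(-3)) ^ 3 = ((-8 : ℤ) : ℤ√(-3)) := by
    rw [pow_succ, pow_two]
    ext <;> simp
  rw [this, ← Int.cast_pow, Zsqrtd.im_intCast]

theorem desc15 (M : ℕ) (hM : 0 < M) (j : ℕ) :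
    (M : ℤ) ∣ (M - 1).descFactorial j - (-1) ^ j * j.factorial := by
  by_cases hj : M ≤ j
  · rw [Nat.descFactorial_eq_zero_iff_lt.mpr (by omega)]
    have : (M : ℤ) ∣ j.factorial := by exact_mod_cast Nat.dvd_factorial hM hj
    simpa using this.mul_left _
  · induction j with
    | zero => simp
    | succ j ih =>
      obtain ⟨c, hc⟩ := ih (by omega)
      rw [Nat.descFactorial_succ, Nat.factorial_succ]
      have e : ((M - 1 - j : ℕ) : ℤ) = M - 1 - j := by omega
      push_cast [e]
      refine ⟨(M - 1 - j) * c + (-1) ^ j * j.factorial, ?_⟩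
      rw [pow_succ]
      linear_combination ((M : ℤ) - 1 - j) * hc

/-- arctangent partial sums -/
noncomputable def AA15 (K : ℕ) : ℚ_[3] := ∑ k ∈ Finset.range K, (-3 : ℚ_[3]) ^ k / (2 * k + 1)

theorem norm_AA15 (t : ℕ) (ht : 0 < t) : ‖AA15 (3 * t)‖ ≤ ‖((3 * t : ℕ) : ℚ_[3])‖ := by
  set M := 3 * t with hM
  have hM0 : 0 < M := by omega
  have hMq : (M : ℚ_[3]) ≠ 0 := by exact_mod_cast hM0.ne'
  have hz : ∑ k ∈ Finset.range M, (-3 : ℚ_[3]) ^ k / (2 * k + 1) * ((M - 1).choose (2 * k) : ℚ_[3]) = 0 := by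
    have h := congrArg (Int.cast : ℤ → ℚ_[3]) (sum_zero15 t ht)
    rw [← hM] at h
    push_cast at h
    have : (M : ℚ_[3]) * ∑ k ∈ Finset.range M, (-3 : ℚ_[3]) ^ k / (2 * k + 1) *
        ((M - 1).choose (2 * k) : ℚ_[3]) = 0 := by
      rw [← h, Finset.mul_sum]
      apply Finset.sum_congr rfl
      intro k _
      have h1 : (2 * (k : ℚ_[3]) + 1) ≠ 0 := by exact_mod_cast (by omega : 2 * k + 1 ≠ 0)
      have h2 := Nat.add_one_mul_choose_eq (M - 1) (2 * k)
      rw [Nat.sub_add_cancel hM0] at h2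
      have h3 : (M : ℚ_[3]) * ((M - 1).choose (2 * k) : ℚ_[3]) =
        (M.choose (2 * k + 1) : ℚ_[3]) * (2 * k + 1) := by exact_mod_cast h2
      field_simp
      linear_combination h3
    exact (mul_eq_zero.mp this).resolve_left hMq
  have e : AA15 M = ∑ k ∈ Finset.range M, (-3 : ℚ_[3]) ^ k / (2 * k + 1) *
      (1 - ((M - 1).choose (2 * k) : ℚ_[3])) := by
    simp only [mul_sub, Finset.sum_sub_distrib, hz, AA15, mul_one, sub_zero]
  rw [e]
  apply IsUltrametricDist.norm_sum_le_of_forall_le_of_nonneg (norm_nonneg _)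
  intro k _
  obtain ⟨c, hc⟩ := desc15 M hM0 (2 * k)
  rw [Nat.descFactorial_eq_factorial_mul_choose] at hc
  have hc' := congrArg (Int.cast : ℤ → ℚ_[3]) hc
  push_cast at hc'
  rw [pow_mul] at hc'
  norm_num at hc'
  have e2 : (-3 : ℚ_[3]) ^ k / (2 * k + 1) * (1 - ((M - 1).choose (2 * k) : ℚ_[3])) =
      (3 : ℚ_[3]) ^ k / ((2 * k + 1).factorial : ℚ_[3]) * (M * ((-(-1) ^ k * c : ℤ) : ℚ_[3])) := by
    have h1 : (2 * (k : ℚ_[3]) + 1) ≠ 0 := by exact_mod_cast (by omega : 2 * k + 1 ≠ 0)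
    have h2 : ((2 * k).factorial : ℚ_[3]) ≠ 0 := by exact_mod_cast (2 * k).factorial_ne_zero
    rw [Nat.factorial_succ]
    push_cast
    rw [show (-3 : ℚ_[3]) = (-1) * 3 by norm_num, mul_pow]
    field_simp
    linear_combination -hc'
  rw [e2, norm_mul, norm_mul]
  have a := norm_fact15 k (2 * k + 1) le_rfl
  have b := Padic.norm_int_le_one (p := 3) (-(-1) ^ k * c)
  calc _ ≤ 1 * (‖(M : ℚ_[3])‖ * 1) := by gcongr
    _ = _ := by ring

theorem tend_AA15 : Tendsto (fun m : ℕ => AA15 (3 * 3 ^ m)) atTop (𝓝 0) := by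
  have : Tendsto (fun m : ℕ => (3 : ℝ)⁻¹ * (3 : ℝ)⁻¹ ^ m) atTop (𝓝 0) := by
    simpa using (tendsto_pow_atTop_nhds_zero_of_lt_one (by norm_num : (0 : ℝ) ≤ 3⁻¹)
      (by norm_num)).const_mul (3 : ℝ)⁻¹
  apply squeeze_zero_norm _ this
  intro m
  refine (norm_AA15 (3 ^ m) (by positivity)).trans ?_
  push_cast
  rw [norm_mul, norm_pow, norm_three15]

theorem norm_QQ15 (n : ℕ) (hn : 0 < n) (K : ℕ) :
    ‖GG15 n (K + 2) / n ^ 2 - 2 * AA15 (K + 2) / n + 1‖ ≤ 3⁻¹ := by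
  have hn0 : (n : ℚ_[3]) ≠ 0 := by exact_mod_cast hn.ne'
  choose c hc using nn15_dvd n
  have hc' : ∀ k, (nn15 n k : ℚ_[3]) - nn15 0 k = n * c k := fun k => by
    exact_mod_cast congrArg (Int.cast : ℤ → ℚ_[3]) (hc k)
  have e : GG15 n (K + 2) / n ^ 2 - 2 * AA15 (K + 2) / n =
      ∑ k ∈ Finset.range (K + 2), (-3 : ℚ_[3]) ^ k / (nn15 0 (k + 1) : ℚ_[3]) * ((2 * c k : ℤ) : ℚ_[3]) := by
    have : GG15 n (K + 2) / n ^ 2 - 2 * AA15 (K + 2) / n = 2 / n *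
        (∑ k ∈ Finset.range (K + 2), (-3 : ℚ_[3]) ^ k / (nn15 0 (k + 1) : ℚ_[3]) * (nn15 n k : ℚ_[3])
          - AA15 (K + 2)) := by
      unfold GG15
      field_simp
    rw [this, AA15, ← Finset.sum_sub_distrib, Finset.mul_sum]
    apply Finset.sum_congr rfl
    intro k _
    have hD0 : (nn15 0 k : ℚ_[3]) ≠ 0 := by exact_mod_cast (nn15_zero_pos k).ne'
    have h1 : (2 * (k : ℚ_[3]) + 1) ≠ 0 := by exact_mod_cast (by omega : 2 * k + 1 ≠ 0)
    rw [nn15_succ]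
    push_cast
    simp only [mul_zero, zero_add]
    field_simp
    linear_combination hc' k
  have c0 : c 0 = 0 := by
    have := hc 0
    simp [nn15] at this
    omega
  have c1 : c 1 = 2 := by
    have := hc 1
    simp [nn15] at this
    have hz : (n : ℤ) ≠ 0 := by omega
    apply mul_left_cancel₀ hz
    linarith
  rw [e, Finset.sum_range_succ', Finset.sum_range_succ']
  have d2 : nn15 0 2 = 3 := by decide
  have t : ((-3 : ℚ_[3]) ^ (0 + 1) / (nn15 0 (0 + 1 + 1) : ℚ_[3]) * ((2 * c (0 + 1) : ℤ) : ℚ_[3])) = -4 := by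
    simp only [zero_add, c1, one_add_one_eq_two, d2]
    norm_num
  rw [t, c0]
  have t2 : ∀ x : ℚ_[3], x + -4 + (-3 : ℚ_[3]) ^ 0 / (nn15 0 (0 + 1) : ℚ_[3]) * ((2 * 0 : ℤ) : ℚ_[3]) + 1
      = x + -3 := by
    intro x
    simp
    ring
  rw [t2]
  refine (IsUltrametricDist.norm_add_le_max _ _).trans (max_le ?_ ?_)
  · apply IsUltrametricDist.norm_sum_le_of_forall_le_of_nonneg (by norm_num)
    intro k _
    rw [norm_mul]
    have b := Padic.norm_int_le_one (p := 3) (2 * c (k + 1 + 1))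
    have a : ‖(-3 : ℚ_[3]) ^ (k + 1 + 1) / (nn15 0 (k + 1 + 1 + 1) : ℚ_[3])‖ ≤ 3⁻¹ := by
      rcases Nat.eq_zero_or_pos k with rfl | hk
      · have d3 : nn15 0 (0 + 1 + 1 + 1) = 15 := by decide
        rw [d3]
        have : (-3 : ℚ_[3]) ^ (0 + 1 + 1) / ((15 : ℤ) : ℚ_[3]) = 3 / ((5 : ℕ) : ℚ_[3]) := by norm_num
        rw [this, norm_div, norm_three15]
        have h5 : ‖((5 : ℕ) : ℚ_[3])‖ = 1 := by
          rw [Padic.norm_natCast_eq_one_iff]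
          decide
        rw [h5]
        simp
      · refine (norm_D15 _).trans ?_
        obtain ⟨d, hd⟩ := Nat.dvd_factorial (by norm_num : 0 < 3) (by omega : 3 ≤ k + 1 + 1)
        rw [hd]
        push_cast
        rw [norm_mul, norm_three15]
        have b := Padic.norm_int_le_one (p := 3) d
        rw [Int.cast_natCast] at b
        calc _ ≤ (3 : ℝ)⁻¹ * 1 := by gcongr
          _ = _ := by ring
    calc _ ≤ (3 : ℝ)⁻¹ * 1 := by gcongr
      _ = _ := by ring
  · rw [norm_neg, norm_three15]

theorem final15 (n : ℕ) (hn : 0 < n) : ‖gg15 n / n ^ 2 + 1‖ ≤ 3⁻¹ := by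
  have hK : Tendsto (fun m : ℕ => 3 * 3 ^ m) atTop atTop := by
    apply tendsto_atTop_mono _ tendsto_id
    intro m
    have := Nat.lt_pow_self (n := m) (by norm_num : 1 < 3)
    simp only [id]
    omega
  have h := ((((tend_GG15 n).comp hK).div_const ((n : ℚ_[3]) ^ 2)).sub
    ((tend_AA15.const_mul 2).div_const (n : ℚ_[3]))).add_const 1
  have h2 := h.norm
  simp only [mul_zero, zero_div, sub_zero] at h2
  apply le_of_tendsto' h2
  intro m
  have hp : 0 < 3 ^ m := by positivity
  have := norm_QQ15 n hn (3 * 3 ^ m - 2)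
  rw [Nat.sub_add_cancel (by omega)] at this
  exact this

/-- For every positive integer `n`, the rational number
`(∑_{k=0}^{n-1} C(2k,k)) / (n² C(2n,n))`, viewed in `ℚ₃`, is a 3-adic integer of
valuation `0` congruent to `-1` mod `3`: its norm is `1` and it lies in `-1 + 3ℤ₃`. -/
theorem stmt_15 (n : ℕ) (hn : 0 < n) :
    ‖(((∑ k ∈ Finset.range n, (Nat.choose (2 * k) k : ℚ)) /
        ((n : ℚ) ^ 2 * (Nat.choose (2 * n) n : ℚ)) : ℚ) : ℚ_[3])‖ = 1 ∧
      ‖(((∑ k ∈ Finset.range n, (Nat.choose (2 * k) k : ℚ)) /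
        ((n : ℚ) ^ 2 * (Nat.choose (2 * n) n : ℚ)) : ℚ) : ℚ_[3]) + 1‖ ≤ (3 : ℝ)⁻¹ := by
  have e : (((∑ k ∈ Finset.range n, (Nat.choose (2 * k) k : ℚ)) /
        ((n : ℚ) ^ 2 * (Nat.choose (2 * n) n : ℚ)) : ℚ) : ℚ_[3]) = gg15 n / n ^ 2 := by
    unfold gg15
    push_cast
    rw [div_div, mul_comm ((n : ℚ_[3]) ^ 2)]
  rw [e]
  have h := final15 n hn
  refine ⟨?_, h⟩
  have h2 : gg15 n / (n : ℚ_[3]) ^ 2 = (gg15 n / n ^ 2 + 1) + (-1) := by ring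
  have h3 : ‖(-1 : ℚ_[3])‖ = 1 := by simp
  have h4 : ‖gg15 n / (n : ℚ_[3]) ^ 2 + 1‖ < ‖(-1 : ℚ_[3])‖ := by
    rw [h3]
    exact lt_of_le_of_lt h (by norm_num)
  rw [h2, IsUltrametricDist.norm_add_eq_max_of_norm_ne_norm h4.ne, max_eq_right h4.le, h3]
end

section
/- The function n ↦ (∑_{k=0}^{n-1} C(2k,k))/(n² C(2n,n)) on positive integers is uniformly continuous for the 3-adic metric: for all s, if m ≡ n (mod 3^s) with m, n ≥ 1, then f₁(m) ≡ f₁(n) (mod 3^{s'}) for some s' → ∞ as s → ∞; hence it extends to a continuous function f₁ : ℤ₃ → ℚ₃. -/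
open Finset Filter Topology

/-- Central coefficients `3^k k!^2/(2k+1)!`. -/
noncomputable def zd (k : ℕ) : ℚ_[3] := 3 ^ k / ((2 * k + 1) * (Nat.centralBinom k : ℚ_[3]))

/-- Signed partial sums of `zd`: Mahler coefficients of `n ↦ S(n)/(n C(2n,n))`. -/
noncomputable def za (k : ℕ) : ℚ_[3] := -(-1) ^ k * (∑ j ∈ range k, zd j) / 2

/-- Mahler coefficients of the shifted function. -/
noncomputable def zc (k : ℕ) : ℚ_[3] := (-1) ^ k * zd k / 2

lemma za_add (k : ℕ) : za (k + 1) + za k = zc k := by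
  simp only [za, zc, sum_range_succ, pow_succ]; ring

lemma za_zero : za 0 = 0 := by simp [za]

lemma two_mul_add_ne (k : ℕ) : (2 * (k : ℚ_[3]) + 1) ≠ 0 := by
  have : ((2 * k + 1 : ℕ) : ℚ_[3]) ≠ 0 := Nat.cast_ne_zero.mpr (by omega)
  exact_mod_cast this

lemma cb_ne (k : ℕ) : (Nat.centralBinom k : ℚ_[3]) ≠ 0 :=
  Nat.cast_ne_zero.mpr (Nat.centralBinom_ne_zero k)

lemma cb_succ (k : ℕ) : ((k : ℚ_[3]) + 1) * (Nat.centralBinom (k + 1) : ℚ_[3])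
    = 2 * (2 * k + 1) * (Nat.centralBinom k : ℚ_[3]) := by
  exact_mod_cast Nat.succ_mul_centralBinom_succ k

lemma zd_succ (k : ℕ) : (4 * (k : ℚ_[3]) + 6) * zd (k + 1) = 3 * (k + 1) * zd k := by
  have h1 := two_mul_add_ne k
  have h2 := two_mul_add_ne (k + 1)
  have h3 := cb_ne k
  have h4 := cb_ne (k + 1)
  have h5 := cb_succ k
  push_cast at h2
  unfold zd
  push_cast
  rw [mul_div_assoc', mul_div_assoc', div_eq_div_iff (mul_ne_zero h2 h4) (mul_ne_zero h1 h3)]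
  linear_combination (-3 * 3 ^ k * (2 * (k : ℚ_[3]) + 3)) * h5

lemma zc_succ (k : ℕ) : (4 * (k : ℚ_[3]) + 6) * zc (k + 1) = -3 * (k + 1) * zc k := by
  unfold zc
  rw [pow_succ]
  linear_combination (-(-1) ^ k / 2) * zd_succ k

lemma zc_zero : zc 0 = 1 / 2 := by simp [zc, zd]

lemma choose_succ_cast (n k : ℕ) : (n.choose (k + 1) : ℚ_[3]) * (k + 1)
    = n.choose k * ((n : ℚ_[3]) - k) := by
  rcases le_or_gt k n with h | h
  · have := Nat.choose_succ_right_eq n k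
    have h2 : ((n.choose (k + 1) * (k + 1) : ℕ) : ℚ_[3]) = ((n.choose k * (n - k) : ℕ) : ℚ_[3]) := by
      rw [this]
    push_cast [Nat.cast_sub h] at h2
    exact h2
  · rw [Nat.choose_eq_zero_of_lt h, Nat.choose_eq_zero_of_lt (by omega)]; simp

lemma partial_sum (n N : ℕ) :
    ∑ k ∈ range N, ((4 * (n : ℚ_[3]) + 2) * zc k - n * za k) * n.choose k
      = 1 + n.choose N * (N * za N - (4 * N + 2) * zc N) := by
  induction N with
  | zero => simp [zc_zero]
  | succ N ih =>
    rw [sum_range_succ, ih]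
    have h1 := choose_succ_cast n N
    have h2 := za_add N
    have h3 := zc_succ N
    have h4 : za (N + 1) = zc N - za N := by linear_combination h2
    rw [h4]
    push_cast
    linear_combination (-(4 * zc N - za N)) * h1 + (n.choose (N + 1) : ℚ_[3]) * h3

/-- The Mahler sum of `n ↦ S(n)/(n C(2n,n))`. -/
noncomputable def zh (n : ℕ) : ℚ_[3] := ∑ k ∈ range (n + 1), za k * n.choose k

lemma zh_succ (n : ℕ) : zh (n + 1) = ∑ k ∈ range (n + 1), zc k * n.choose k := by
  unfold zh
  rw [sum_range_succ' _ (n + 1), za_zero, zero_mul, add_zero]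
  have h1 : ∑ k ∈ range (n + 1), za k * (n.choose k : ℚ_[3])
      = ∑ k ∈ range (n + 1), za (k + 1) * (n.choose (k + 1) : ℚ_[3]) := by
    have := sum_range_succ' (fun k => za k * (n.choose k : ℚ_[3])) (n + 1)
    rw [sum_range_succ] at this
    simpa [za_zero] using this
  simp only [← za_add, add_mul, sum_add_distrib, Nat.choose_succ_succ', Nat.cast_add, mul_add]
  rw [h1]

lemma zh_rec (n : ℕ) : (4 * (n : ℚ_[3]) + 2) * zh (n + 1) = n * zh n + 1 := by
  have h := partial_sum n (n + 1)
  rw [Nat.choose_succ_self] at h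
  rw [zh_succ, zh, mul_sum, mul_sum]
  simp only [sub_mul, sum_sub_distrib, mul_assoc] at h ⊢
  linear_combination h

lemma S_eq (n : ℕ) : (∑ k ∈ range n, (Nat.centralBinom k : ℚ_[3]))
    = n * Nat.centralBinom n * zh n := by
  induction n with
  | zero => simp
  | succ n ih =>
    rw [sum_range_succ, ih]
    push_cast
    linear_combination (-zh (n + 1)) * cb_succ n - (Nat.centralBinom n : ℚ_[3]) * zh_rec n

/-- Mahler coefficients of the final function. -/
noncomputable def ze (k : ℕ) : ℚ_[3] := za (k + 1) / (k + 1)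

lemma zh_eq (n : ℕ) : zh (n + 1) = (n + 1) * ∑ k ∈ range (n + 1), n.choose k • ze k := by
  unfold zh
  rw [sum_range_succ' _ (n + 1), za_zero, zero_mul, add_zero, mul_sum]
  refine sum_congr rfl fun k _ => ?_
  have h : ((n : ℚ_[3]) + 1) * n.choose k = (n + 1).choose (k + 1) * (k + 1) := by
    exact_mod_cast Nat.add_one_mul_choose_eq n k
  have hk : ((k : ℚ_[3]) + 1) ≠ 0 := by exact_mod_cast Nat.succ_ne_zero k
  rw [nsmul_eq_mul, ze]
  field_simp
  linear_combination (-za (k + 1)) * h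

/-! ### Chebyshev identity -/

lemma cheb_U (m : ℕ) : ∑ k ∈ range (m + 1), (-3 : ℤ) ^ k * (m + 1 + k).choose (2 * k + 1)
    = ∑ k ∈ range (m + 1), (-3 : ℤ) ^ k * (m + k).choose (2 * k)
      + ∑ k ∈ range m, (-3 : ℤ) ^ k * (m + k).choose (2 * k + 1) := by
  have h : ∑ k ∈ range m, (-3 : ℤ) ^ k * (m + k).choose (2 * k + 1)
      = ∑ k ∈ range (m + 1), (-3 : ℤ) ^ k * (m + k).choose (2 * k + 1) := by
    rw [sum_range_succ, Nat.choose_eq_zero_of_lt (show m + m < 2 * m + 1 by omega)]; simp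
  rw [h, ← sum_add_distrib]
  refine sum_congr rfl fun k _ => ?_
  rw [show m + 1 + k = (m + k) + 1 by ring, Nat.choose_succ_succ']
  push_cast; ring

lemma cheb_V (m : ℕ) : ∑ k ∈ range (m + 2), (-3 : ℤ) ^ k * (m + 1 + k).choose (2 * k)
    = ∑ k ∈ range (m + 1), (-3 : ℤ) ^ k * (m + k).choose (2 * k)
      - 3 * ∑ k ∈ range (m + 1), (-3 : ℤ) ^ k * (m + 1 + k).choose (2 * k + 1) := by
  have h : ∑ k ∈ range (m + 1), (-3 : ℤ) ^ k * (m + k).choose (2 * k)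
      = ∑ k ∈ range (m + 2), (-3 : ℤ) ^ k * (m + k).choose (2 * k) := by
    rw [sum_range_succ _ (m + 1),
      Nat.choose_eq_zero_of_lt (show m + (m + 1) < 2 * (m + 1) by omega)]; simp
  rw [h, sum_range_succ' _ (m + 1), sum_range_succ' _ (m + 1), mul_sum]
  have : ∀ k ∈ range (m + 1), (-3 : ℤ) ^ (k + 1) * (m + 1 + (k + 1)).choose (2 * (k + 1))
      = (-3 : ℤ) ^ (k + 1) * (m + (k + 1)).choose (2 * (k + 1))
        - 3 * ((-3 : ℤ) ^ k * (m + 1 + k).choose (2 * k + 1)) := by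
    intro k _
    rw [show m + 1 + (k + 1) = (m + 1 + k) + 1 by ring, show 2 * (k + 1) = (2 * k + 1) + 1 by ring,
      Nat.choose_succ_succ', show m + (k + 1) = m + 1 + k by ring]
    push_cast; ring
  rw [sum_congr rfl this, sum_sub_distrib]
  simp
  ring

lemma cheb (j : ℕ) : ∑ k ∈ range (3 * j), (-3 : ℤ) ^ k * (3 * j + k).choose (2 * k + 1) = 0 ∧
    ∑ k ∈ range (3 * j + 1), (-3 : ℤ) ^ k * (3 * j + k).choose (2 * k) = 1 := by
  induction j with
  | zero => simp
  | succ j ih =>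
    obtain ⟨hU, hV⟩ := ih
    have a1 := cheb_U (3 * j)
    have b1 := cheb_V (3 * j)
    have a2 := cheb_U (3 * j + 1)
    have b2 := cheb_V (3 * j + 1)
    have a3 := cheb_U (3 * j + 1 + 1)
    have b3 := cheb_V (3 * j + 1 + 1)
    rw [show 3 * (j + 1) = 3 * j + 1 + 1 + 1 by ring]
    simp only [add_assoc, Nat.reduceAdd] at *
    constructor <;> linarith

/-! ### The 3-adic sum of `zd` vanishes -/

/-- The interpolating product. -/
noncomputable def zP (x : ℚ_[3]) (k : ℕ) : ℚ_[3] := ∏ i ∈ range k, (1 - x ^ 2 / ((i : ℚ_[3]) + 1) ^ 2)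

lemma succ_ne (k : ℕ) : ((k : ℚ_[3]) + 1) ≠ 0 := by exact_mod_cast Nat.succ_ne_zero k

lemma zP_int (M k : ℕ) : zP ((M : ℚ_[3]) + 1) k
    = (((-1) ^ k * (M.choose k) * ((M + 1 + k).choose k) : ℤ) : ℚ_[3]) := by
  induction k with
  | zero => simp [zP]
  | succ k ih =>
    have h0 := succ_ne k
    have h1 := choose_succ_cast M k
    have h2 : ((M : ℚ_[3]) + 1 + k + 1) * (M + 1 + k).choose k
        = (M + 1 + k + 1).choose (k + 1) * (k + 1) := by
      exact_mod_cast Nat.add_one_mul_choose_eq (M + 1 + k) k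
    have e1 : (M.choose (k + 1) : ℚ_[3]) = M.choose k * ((M : ℚ_[3]) - k) / (k + 1) := by
      rw [eq_div_iff h0, h1]
    have e2 : ((M + 1 + k + 1).choose (k + 1) : ℚ_[3])
        = ((M : ℚ_[3]) + 1 + k + 1) * (M + 1 + k).choose k / (k + 1) := by
      rw [eq_div_iff h0, h2]
    have hP : zP ((M : ℚ_[3]) + 1) (k + 1)
        = zP ((M : ℚ_[3]) + 1) k * (1 - ((M : ℚ_[3]) + 1) ^ 2 / ((k : ℚ_[3]) + 1) ^ 2) := by
      simp only [zP, prod_range_succ]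
    rw [hP, ih]
    push_cast
    rw [← add_assoc, e1, e2]
    field_simp
    ring

lemma zP_choose (m k : ℕ) : (m : ℚ_[3]) * (zd k * zP m k)
    = (((-3) ^ k * ((m + k).choose (2 * k + 1)) : ℤ) : ℚ_[3]) := by
  induction k with
  | zero => simp [zP, zd]
  | succ k ih =>
    have h0 := succ_ne k
    have hP : zP (m : ℚ_[3]) (k + 1)
        = zP (m : ℚ_[3]) k * (1 - (m : ℚ_[3]) ^ 2 / ((k : ℚ_[3]) + 1) ^ 2) := by
      simp only [zP, prod_range_succ]
    have h6 : (4 * (k : ℚ_[3]) + 6) ≠ 0 := by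
      have : ((4 * k + 6 : ℕ) : ℚ_[3]) ≠ 0 := Nat.cast_ne_zero.mpr (by omega)
      exact_mod_cast this
    have hd : zd (k + 1) = 3 * (k + 1) * zd k / (4 * k + 6) := by
      rw [eq_div_iff h6, ← zd_succ]; ring
    have h1 := choose_succ_cast (m + k) (2 * k + 1)
    have h2 : ((m : ℚ_[3]) + k + 1) * (m + k).choose (2 * k + 1 + 1)
        = (m + k + 1).choose (2 * k + 1 + 1 + 1) * (2 * k + 1 + 1 + 1) := by
      exact_mod_cast Nat.add_one_mul_choose_eq (m + k) (2 * k + 1 + 1)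
    push_cast at ih h1 ⊢
    rw [show 2 * (k + 1) + 1 = 2 * k + 1 + 1 + 1 by ring, ← add_assoc]
    have e : (((m + k + 1).choose (2 * k + 1 + 1 + 1) : ℕ) : ℚ_[3]) * ((4 * k + 6) * (k + 1))
        = ((m : ℚ_[3]) + k + 1) * ((m : ℚ_[3]) - k - 1) * (m + k).choose (2 * k + 1) := by
      linear_combination (-(2 * (k : ℚ_[3]) + 2)) * h2 + ((m : ℚ_[3]) + k + 1) * h1
    have e' : (((m + k + 1).choose (2 * k + 1 + 1 + 1) : ℕ) : ℚ_[3])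
        = ((m : ℚ_[3]) + k + 1) * ((m : ℚ_[3]) - k - 1) * (m + k).choose (2 * k + 1)
          / ((4 * k + 6) * (k + 1)) := by
      rw [eq_div_iff (mul_ne_zero h6 h0), e]
    rw [hP, hd, e', pow_succ (-3 : ℚ_[3]) k]
    have : (m : ℚ_[3]) * (3 * (k + 1) * zd k / (4 * k + 6) *
        (zP m k * (1 - (m : ℚ_[3]) ^ 2 / ((k : ℚ_[3]) + 1) ^ 2)))
        = (m * (zd k * zP m k)) * (3 * (k + 1) / (4 * k + 6) *
          (1 - (m : ℚ_[3]) ^ 2 / ((k : ℚ_[3]) + 1) ^ 2)) := by ring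
    rw [this, ih]
    field_simp
    ring

lemma norm_nat_inv {n : ℕ} (hn : n ≠ 0) : ‖(n : ℚ_[3])‖⁻¹ = (3 : ℝ) ^ (n.factorization 3) := by
  rw [Padic.norm_eq_zpow_neg_valuation (Nat.cast_ne_zero.mpr hn), Padic.valuation_natCast,
    Nat.factorization_def n Nat.prime_three]
  simp

lemma norm_nat_inv_le {n : ℕ} (hn : n ≠ 0) : ‖(n : ℚ_[3])‖⁻¹ ≤ n := by
  rw [norm_nat_inv hn]
  exact_mod_cast Nat.ordProj_le 3 hn

lemma norm_cb_inv_le (k : ℕ) : ‖(Nat.centralBinom k : ℚ_[3])‖⁻¹ ≤ 2 * k + 1 := by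
  rw [norm_nat_inv (Nat.centralBinom_ne_zero k)]
  rcases Nat.eq_zero_or_pos k with rfl | hk
  · simp
  · have := Nat.pow_factorization_choose_le (p := 3) (n := 2 * k) (k := k) (by omega)
    have h2 : 3 ^ ((Nat.centralBinom k).factorization 3) ≤ 2 * k + 1 := this.trans (by omega)
    exact_mod_cast h2

lemma norm_zd_le (k : ℕ) : ‖zd k‖ ≤ (2 * k + 1) ^ 2 * (1 / 3 : ℝ) ^ k := by
  have h1 : ‖(2 * (k : ℚ_[3]) + 1)‖⁻¹ ≤ 2 * k + 1 := by
    have := norm_nat_inv_le (n := 2 * k + 1) (by omega)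
    exact_mod_cast this
  have h2 := norm_cb_inv_le k
  have h3 : ‖(3 : ℚ_[3])‖ = 1 / 3 := by
    have := Padic.norm_p (p := 3)
    simpa using this
  rw [zd, norm_div, norm_mul, norm_pow, h3, div_eq_mul_inv, mul_inv, mul_comm, sq]
  gcongr

/-- The dominating real series. -/
noncomputable def zB (k : ℕ) : ℝ := (2 * k + 1) ^ 3 * (1 / 3 : ℝ) ^ k

lemma zB_summable : Summable zB := by
  have h (i : ℕ) := summable_pow_mul_geometric_of_norm_lt_one (R := ℝ) i (r := 1 / 3)
    (by norm_num)
  have := ((((h 3).mul_left 8).add ((h 2).mul_left 12)).add ((h 1).mul_left 6)).add (h 0)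
  refine this.congr fun k => ?_
  unfold zB
  ring

lemma norm_zd_le_B (k : ℕ) : ‖zd k‖ ≤ zB k := by
  refine (norm_zd_le k).trans ?_
  unfold zB
  gcongr
  · linarith [(Nat.cast_nonneg k : (0 : ℝ) ≤ k)]
  · norm_num

lemma zd_summable : Summable zd := Summable.of_norm_bounded zB_summable norm_zd_le_B

lemma zd_tsum : ∑' k, zd k = 0 := by
  have key : Tendsto (fun s : ℕ => ∑' k, zd k * zP (((3 ^ (s + 1) : ℕ) : ℚ_[3])) k) atTop
      (𝓝 (∑' k, zd k)) := by
    refine tendsto_tsum_of_dominated_convergence zB_summable ?_ ?_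
    · intro k
      have hx : Tendsto (fun s : ℕ => (((3 ^ (s + 1) : ℕ) : ℚ_[3]))) atTop (𝓝 0) := by
        have h3 : ‖(3 : ℚ_[3])‖ < 1 := by
          have := Padic.norm_p_lt_one (p := 3)
          simpa using this
        have := (tendsto_pow_atTop_nhds_zero_of_norm_lt_one h3).comp (tendsto_add_atTop_nat 1)
        simpa [Function.comp_def] using this
      have hc : Continuous (fun x : ℚ_[3] => zd k * zP x k) := by
        unfold zP
        fun_prop
      have := (hc.tendsto 0).comp hx
      simpa [zP, Function.comp_def] using this
    · refine Eventually.of_forall fun s k => ?_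
      obtain ⟨M, hM⟩ : ∃ M, 3 ^ (s + 1) = M + 1 :=
        ⟨3 ^ (s + 1) - 1, by have : 0 < 3 ^ (s + 1) := by positivity
                             omega⟩
      rw [hM, norm_mul, Nat.cast_succ, zP_int]
      exact (mul_le_of_le_one_right (norm_nonneg _) (Padic.norm_int_le_one _)).trans
        (norm_zd_le_B k)
  have hz : ∀ s : ℕ, ∑' k, zd k * zP (((3 ^ (s + 1) : ℕ) : ℚ_[3])) k = 0 := by
    intro s
    have hm : ((3 ^ (s + 1) : ℕ) : ℚ_[3]) ≠ 0 := Nat.cast_ne_zero.mpr (by positivity)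
    generalize hj : 3 ^ s = j
    have hmj : 3 ^ (s + 1) = 3 * j := by rw [pow_succ, hj]; ring
    rw [hmj] at hm ⊢
    apply mul_left_cancel₀ hm
    rw [← tsum_mul_left, mul_zero]
    simp only [zP_choose]
    rw [tsum_eq_sum (s := range (3 * j))]
    · rw [← Int.cast_sum, (cheb j).1]; simp
    · intro k hk
      rw [mem_range] at hk
      rw [Nat.choose_eq_zero_of_lt (by omega)]; simp
  simp only [hz] at key
  exact tendsto_nhds_unique key tendsto_const_nhds |>.symm ▸ rfl

lemma ze_tendsto : Tendsto ze atTop (𝓝 0) := by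
  have hB := (tendsto_add_atTop_iff_nat 1).mpr (tendsto_sum_nat_add zB)
  refine squeeze_zero_norm (a := fun k => ∑' j, zB (j + (k + 1))) ?_ hB
  intro k
  have h1 := zd_summable.sum_add_tsum_nat_add (k + 1)
  rw [zd_tsum] at h1
  have h2 : ‖(2 : ℚ_[3])‖ = 1 := by
    have := (Padic.norm_natCast_eq_one_iff (p := 3) (n := 2)).mpr (by norm_num)
    exact_mod_cast this
  have h3 : ‖((k : ℚ_[3]) + 1)‖⁻¹ ≤ k + 1 := by
    have := norm_nat_inv_le (n := k + 1) (by omega)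
    exact_mod_cast this
  have h4 : ∑ j ∈ range (k + 1), zd j = -∑' j, zd (j + (k + 1)) := eq_neg_of_add_eq_zero_left h1
  have hn : ‖ze k‖ = ‖∑' j, zd (j + (k + 1)) * ((k : ℚ_[3]) + 1)⁻¹‖ := by
    rw [tsum_mul_right, ze, za, h4]
    simp [h2, div_eq_mul_inv]
  rw [hn]
  refine tsum_of_norm_bounded ((summable_nat_add_iff (k + 1)).mpr zB_summable).hasSum ?_
  intro j
  rw [norm_mul, norm_inv]
  have h5 := norm_zd_le (j + (k + 1))
  have h6 : ‖((k : ℚ_[3]) + 1)‖⁻¹ ≤ 2 * ((j + (k + 1) : ℕ) : ℝ) + 1 := by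
    refine h3.trans ?_
    push_cast
    have := (Nat.cast_nonneg k : (0 : ℝ) ≤ k)
    have := (Nat.cast_nonneg j : (0 : ℝ) ≤ j)
    linarith
  calc _ ≤ ((2 * ((j + (k + 1) : ℕ) : ℝ) + 1) ^ 2 * (1 / 3 : ℝ) ^ (j + (k + 1)))
        * (2 * ((j + (k + 1) : ℕ) : ℝ) + 1) := by gcongr
    _ = zB (j + (k + 1)) := by unfold zB; ring


instance zBounded : IsBoundedSMul ℤ_[3] ℚ_[3] :=
  IsBoundedSMul.of_norm_smul_le fun x y => by
    rw [Algebra.smul_def, norm_mul]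
    exact le_of_eq rfl

/-- The function `n ↦ (∑_{k=0}^{n-1} C(2k,k))/(n² C(2n,n))` on positive integers extends
to a continuous function `f₁ : ℤ₃ → ℚ₃`. -/
theorem stmt_16 :
    ∃ f₁ : C(ℤ_[3], ℚ_[3]), ∀ n : ℕ, 0 < n →
      f₁ (n : ℤ_[3]) =
        (((∑ k ∈ Finset.range n, (Nat.choose (2 * k) k : ℚ)) /
          ((n : ℚ) ^ 2 * (Nat.choose (2 * n) n : ℚ)) : ℚ) : ℚ_[3]) := by
  refine ⟨(PadicInt.mahlerSeries (p := 3) ze).comp ⟨fun x => x - 1, by fun_prop⟩, ?_⟩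
  intro n hn
  obtain ⟨m, rfl⟩ : ∃ m, n = m + 1 := ⟨n - 1, by omega⟩
  have e : ((m + 1 : ℕ) : ℤ_[3]) - 1 = (m : ℤ_[3]) := by push_cast; ring
  simp only [ContinuousMap.comp_apply, ContinuousMap.coe_mk]
  rw [e, PadicInt.mahlerSeries_apply_nat ze_tendsto le_rfl]
  have hS := S_eq (m + 1)
  have hh := zh_eq m
  have h0 := succ_ne m
  have h1 := cb_ne (m + 1)
  simp only [← Nat.centralBinom_eq_two_mul_choose]
  push_cast at hS ⊢
  rw [hS, hh, eq_div_iff (mul_ne_zero (pow_ne_zero 2 h0) h1)]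
  ring
end

section
/- In ℚ₅, the series b₂(-5) converges and equals 0, where b₂(t) is the coefficient of x² in ∑_{k≥1} t^{k-1} C(x,k)/C(2k,k), i.e. b₂(t) = ∑_{k≥1} t^{k-1} e_{k}/C(2k,k) with e_k = (-1)^k/k! · (coefficient of x² in x(x-1)⋯(x-k+1)) = (-1)^{k-1} H_{k-1}/k where H_{k-1} = ∑_{j=1}^{k-1} 1/j. Thus ∑_{k≥2} (-1)^{k-1} (-5)^{k-1} H_{k-1} / (k · C(2k,k)) = 0 in ℚ₅. -/
instance : Fact (Nat.Prime 5) := ⟨by norm_num⟩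
open Filter Topology

namespace B2

lemma norm_inv_nat_le (k : ℕ) : ‖((k : ℚ_[5]) + 1)⁻¹‖ ≤ (k : ℝ) + 1 := by
  have h : ((k : ℚ_[5]) + 1) = ((k + 1 : ℕ) : ℚ_[5]) := by push_cast; rfl
  rw [h, norm_inv]
  have hk : ((k + 1 : ℕ) : ℚ_[5]) ≠ 0 := by exact_mod_cast Nat.succ_ne_zero k
  rw [Padic.norm_eq_zpow_neg_valuation hk, Padic.valuation_natCast, zpow_neg, inv_inv, zpow_natCast]
  have := Nat.le_of_dvd (Nat.succ_pos k) (pow_padicValNat_dvd (p := 5) (n := k + 1))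
  exact_mod_cast this

lemma norm_harmonic_le (n : ℕ) : ‖((harmonic n : ℚ) : ℚ_[5])‖ ≤ (n : ℝ) ^ 2 := by
  rw [harmonic]
  push_cast
  refine (norm_sum_le _ _).trans ?_
  calc _ ≤ ∑ i ∈ Finset.range n, (n : ℝ) := by
        refine Finset.sum_le_sum fun i hi => (norm_inv_nat_le i).trans ?_
        exact_mod_cast Finset.mem_range.1 hi
    _ = _ := by simp [sq]

lemma choose_tendsto (k : ℕ) :
    Tendsto (fun N : ℕ => (((5 ^ N - 1).choose k : ℕ) : ℚ_[5])) atTop (𝓝 ((-1) ^ k)) := by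
  have h5 : Tendsto (fun N : ℕ => (5 : ℚ_[5]) ^ N) atTop (𝓝 0) := by
    apply tendsto_pow_atTop_nhds_zero_of_norm_lt_one
    have := Padic.norm_p (p := 5)
    norm_num at this ⊢
    rw [this]; norm_num
  induction k with
  | zero => simp
  | succ k ih =>
    have e : ∀ N : ℕ, (((5 ^ N - 1).choose (k + 1) : ℕ) : ℚ_[5]) =
        5 ^ N * ((5 ^ N - 1).choose k : ℕ) * ((k : ℚ_[5]) + 1)⁻¹ - ((5 ^ N - 1).choose k : ℕ) := by
      intro N
      obtain ⟨q, hq⟩ : ∃ q, 5 ^ N = q + 1 := ⟨5 ^ N - 1, by have := pow_pos (show 0 < 5 by norm_num) N; omega⟩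
      have h1 := Nat.add_one_mul_choose_eq q k
      have h2 := Nat.choose_succ_succ q k
      have hk : ((k : ℚ_[5]) + 1) ≠ 0 := by exact_mod_cast Nat.succ_ne_zero k
      have h5 : (5 : ℚ_[5]) ^ N = q + 1 := by exact_mod_cast hq
      rw [h5, hq, Nat.add_sub_cancel]
      rw [h2] at h1
      have h1' : ((q : ℚ_[5]) + 1) * (q.choose k : ℕ) = ((q.choose k : ℕ) + (q.choose (k+1) : ℕ)) * (k + 1) := by
        exact_mod_cast h1
      rw [h1']
      field_simp
      ring
    simp_rw [e]
    have := ((h5.mul ih).mul_const (((k : ℚ_[5]) + 1)⁻¹)).sub ih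
    simpa [pow_succ] using this


section algebra_identities
variable {A : Type*} [CommRing A] {x h t i1 i2 i3 j z3 z1 z0 : A}

lemma alg_j (ht : 3 * t = 1) (hi2 : (1 - t * x) * i2 = 1) : (3 - x) * (t * i2) = 1 := by
  linear_combination hi2 + i2 * ht

lemma alg_e3 (hj : (3 - x) * j = 1) (hi3 : (1 + x) * i3 = 1) :
    8 * (j * i3) - 1 = x + (x ^ 2 - 5) * ((x - 1) * j * i3) := by grind

lemma alg_e1 (hi1 : (1 - x) * i1 = 1) : -(4 * i1) - 1 = x + (x ^ 2 - 5) * i1 := by grind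

lemma alg_De3 (hj : (3 - x) * j = 1) (hi3 : (1 + x) * i3 = 1) :
    8 * (j * -i3 ^ 2 + i3 * j ^ 2) = 16 * (x - 1) * j ^ 2 * i3 ^ 2 := by grind

lemma alg_W1 (hi1 : (1 - x) * i1 = 1) (h4 : 4 * h ^ 2 = 1) :
    1 - h ^ 2 * (5 - (-(4 * i1) - 1) ^ 2) = 2 * (3 - x) * i1 ^ 2 := by grind

lemma alg_W3 (hj : (3 - x) * j = 1) (hi3 : (1 + x) * i3 = 1) (h4 : 4 * h ^ 2 = 1) :
    1 - h ^ 2 * (5 - (8 * (j * i3) - 1) ^ 2) = 4 * j ^ 2 * i3 ^ 2 * (1 - x) ^ 2 := by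
  have e : 16 * (j * i3) ^ 2 - 4 * (j * i3) = 4 * j ^ 2 * i3 ^ 2 * (1 - x) ^ 2 := by grind
  linear_combination e - (1 + 4 * (j * i3) - 16 * (j * i3) ^ 2) * h4

lemma alg_V1 (hi1 : (1 - x) * i1 = 1) (ht : 3 * t = 1) :
    2 * (3 - x) * i1 ^ 2 * ((1 - x) * (1 - x)) = 6 * (1 - t * x) := by grind

lemma alg_V3 (hj : (3 - x) * j = 1) (hi3 : (1 + x) * i3 = 1) (ht : 3 * t = 1) :
    (4 * j ^ 2 * i3 ^ 2 * (1 - x) ^ 2) *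
      ((6 * 6) * (((1 - t * x) * (1 - t * x)) * ((1 + x) * (1 + x)))) =
      ((-4) * (-4)) * ((1 - x) * (1 - x)) := by
  have : 3 * (1 - t * x) = 3 - x := by linear_combination (-x) * ht
  have e2 : (j * (3 - x)) * ((1 + x) * i3) = 1 := by rw [hi3, mul_comm j, hj, mul_one]
  calc _ = 16 * (j * (3 * (1 - t * x)) * ((1 + x) * i3)) ^ 2 * ((1 - x) * (1 - x)) := by ring
    _ = _ := by rw [this, e2]; ring

lemma alg_F0 {S y : A} (hi1 : (1 - x) * i1 = 1) (hi3 : (1 + x) * i3 = 1)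
    (V0 : (-4) * (1 - z0) = (1 - x) * (1 + x))
    (Q : (1 - z0) * S = - y) : S * 1 = 2 * y * (i1 + i3) := by
  have : (1 - x) * (1 + x) * S = 4 * y := by rw [← V0]; linear_combination (-4) * Q
  have h : S = 4 * y * (i1 * i3) := by
    linear_combination (i1 * i3) * this - (S) * hi1 - S * (1-x) * i1 * hi3
  grind

lemma alg_F1 {S y : A} (hj : (3 - x) * j = 1) (W : 1 - z1 = 2 * (3 - x) * i1 ^ 2)
    (Q : (1 - z1) * S = - y) : S * (-(4 * i1 ^ 2)) = 2 * y * j := by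
  rw [W] at Q
  linear_combination (-2 * j) * Q + 4 * i1 ^ 2 * S * hj

lemma alg_F3 {S y : A} (hi1 : (1 - x) * i1 = 1) (W : 1 - z3 = 4 * j ^ 2 * i3 ^ 2 * (1 - x) ^ 2)
    (Q : (1 - z3) * S = - y) : S * (16 * (x - 1) * j ^ 2 * i3 ^ 2) = 4 * y * i1 := by
  rw [W] at Q
  linear_combination (-4 * i1) * Q + 16 * j ^ 2 * i3 ^ 2 * (1 - x) * S * hi1

end algebra_identities

section
variable {R : Type*} [NormedCommRing R] [NormedAlgebra ℚ_[5] R] [CompleteSpace R]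

/-- the logarithm of `X` -/
noncomputable def ell (X : R) : R := - ∑' n : ℕ, ((n : ℚ_[5]) + 1)⁻¹ • (1 - X) ^ (n + 1)

lemma summable_bound {r : ℝ} (h0 : 0 ≤ r) (h1 : r < 1) :
    Summable (fun n : ℕ => ((n : ℝ) + 1) * r ^ (n + 1)) := by
  have := (summable_pow_mul_geometric_of_norm_lt_one 1 (r := r)
    (by rwa [Real.norm_of_nonneg h0]))
  have := (summable_nat_add_iff 1).2 this
  simpa using this

lemma term_bound (c : ℚ_[5]) (n : ℕ) (hc : ‖c‖ ≤ (n : ℝ) + 1) (u : R) :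
    ‖c • u ^ (n + 1)‖ ≤ ((n : ℝ) + 1) * ‖u‖ ^ (n + 1) := by
  rw [norm_smul]
  exact mul_le_mul hc (norm_pow_le' u (Nat.succ_pos n)) (norm_nonneg _) (by positivity)

lemma summable_ell {u : R} (hu : ‖u‖ < 1) :
    Summable (fun n : ℕ => ((n : ℚ_[5]) + 1)⁻¹ • u ^ (n + 1)) :=
  Summable.of_norm_bounded (summable_bound (norm_nonneg u) hu)
    fun n => term_bound _ n (norm_inv_nat_le n) u

lemma ell_tendsto {X : R} (hX : ‖1 - X‖ < 1) :
    Tendsto (fun N : ℕ => ((5 : ℚ_[5]) ^ N)⁻¹ • (X ^ (5 ^ N) - 1)) atTop (𝓝 (ell X)) := by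
  have key : Tendsto (fun N : ℕ => ∑' k : ℕ,
      ((((5 ^ N - 1).choose k : ℕ) : ℚ_[5]) * ((k : ℚ_[5]) + 1)⁻¹) • (X - 1) ^ (k + 1)) atTop
      (𝓝 (∑' k : ℕ, ((-1) ^ k * ((k : ℚ_[5]) + 1)⁻¹) • (X - 1) ^ (k + 1))) := by
    refine tendsto_tsum_of_dominated_convergence
      (bound := fun k : ℕ => ((k : ℝ) + 1) * ‖X - 1‖ ^ (k + 1)) ?_ ?_ ?_
    · exact summable_bound (norm_nonneg _) (by rwa [norm_sub_rev])
    · intro k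
      exact ((choose_tendsto k).mul_const _).smul_const _
    · refine Eventually.of_forall fun N k => term_bound _ k ?_ _
      rw [norm_mul]
      have h1 : ‖(((5 ^ N - 1).choose k : ℕ) : ℚ_[5])‖ ≤ 1 := by
        exact_mod_cast Padic.norm_int_le_one (p := 5) (((5 ^ N - 1).choose k : ℕ) : ℤ)
      calc _ ≤ 1 * ((k : ℝ) + 1) := mul_le_mul h1 (norm_inv_nat_le k) (norm_nonneg _) zero_le_one
        _ = _ := one_mul _
  convert key using 2 with N
  · have hz : (5 : ℚ_[5]) ^ N ≠ 0 := pow_ne_zero _ (by norm_num)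
    rw [tsum_eq_sum (s := Finset.range (5 ^ N))]
    · rw [inv_smul_eq_iff₀ hz, Finset.smul_sum]
      have := add_pow (X - 1) 1 (5 ^ N)
      rw [sub_add_cancel, Finset.sum_range_succ'] at this
      simp only [one_pow, mul_one, pow_zero, Nat.choose_zero_right, Nat.cast_one] at this
      rw [this, add_sub_cancel_right]
      refine Finset.sum_congr rfl fun k _ => ?_
      rw [smul_smul]
      have hc : (5 : ℚ_[5]) ^ N * ((((5 ^ N - 1).choose k : ℕ) : ℚ_[5]) * ((k : ℚ_[5]) + 1)⁻¹) =
          ((5 ^ N).choose (k + 1) : ℕ) := by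
        obtain ⟨q, hq⟩ : ∃ q, 5 ^ N = q + 1 := ⟨5 ^ N - 1, by have := pow_pos (show 0 < 5 by norm_num) N; omega⟩
        have h1 := Nat.add_one_mul_choose_eq q k
        have hk : ((k : ℚ_[5]) + 1) ≠ 0 := by exact_mod_cast Nat.succ_ne_zero k
        have h5 : (5 : ℚ_[5]) ^ N = q + 1 := by exact_mod_cast hq
        rw [h5, hq, Nat.add_sub_cancel, ← mul_assoc, ← div_eq_mul_inv, div_eq_iff hk]
        exact_mod_cast h1
      rw [hc, Nat.cast_smul_eq_nsmul, nsmul_eq_mul, mul_comm]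
    · intro k hk
      have : (5 ^ N - 1).choose k = 0 := Nat.choose_eq_zero_of_lt (by
        have := pow_pos (show 0 < 5 by norm_num) N
        simp at hk; omega)
      simp [this]
  · rw [ell, ← tsum_neg]
    congr 2
    ext k
    have : (1 - X) ^ (k + 1) = (-1) ^ (k + 1) * (X - 1) ^ (k + 1) := by
      rw [← mul_pow]; ring
    rw [this, mul_smul, smul_comm]
    rcases Nat.even_or_odd k with h | h
    · simp [h.neg_one_pow, pow_succ]
    · simp [h.neg_one_pow, pow_succ]

lemma five_tendsto : Tendsto (fun N : ℕ => (5 : ℚ_[5]) ^ N) atTop (𝓝 0) := by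
  apply tendsto_pow_atTop_nhds_zero_of_norm_lt_one
  have := Padic.norm_p (p := 5)
  norm_num at this ⊢
  rw [this]; norm_num

lemma pow_tendsto {X : R} (hX : ‖1 - X‖ < 1) :
    Tendsto (fun N : ℕ => X ^ (5 ^ N)) atTop (𝓝 1) := by
  have := (five_tendsto.smul (ell_tendsto hX)).add_const 1
  rw [zero_smul, zero_add] at this
  refine this.congr fun N => ?_
  rw [smul_smul, mul_inv_cancel₀ (pow_ne_zero _ (by norm_num)), one_smul, sub_add_cancel]

lemma ell_mul' {X Y : R} (hX : ‖1 - X‖ < 1) (hY : ‖1 - Y‖ < 1) (hXY : ‖1 - X * Y‖ < 1) :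
    ell (X * Y) = ell X + ell Y := by
  have h := (((ell_tendsto hX).mul (pow_tendsto hY)).add (ell_tendsto hY))
  rw [mul_one] at h
  refine tendsto_nhds_unique (ell_tendsto hXY) (h.congr fun N => ?_)
  rw [smul_mul_assoc, ← smul_add, mul_pow]
  congr 1; ring

lemma ell_ideal {u : R} (hu : ‖u‖ < 1) : ∃ w, ell (1 - u) = u * w := by
  refine ⟨- ∑' n : ℕ, ((n : ℚ_[5]) + 1)⁻¹ • u ^ n, ?_⟩
  have hs : Summable (fun n : ℕ => ((n : ℚ_[5]) + 1)⁻¹ • u ^ n) := by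
    refine (summable_nat_add_iff 1).1 (Summable.of_norm_bounded (g := fun n : ℕ => ((n : ℝ) + 1) * ‖u‖ ^ (n + 1) + ‖u‖ ^ (n+1)) 
      ((summable_bound (norm_nonneg u) hu).add ((summable_nat_add_iff 1).2 (summable_geometric_of_lt_one (norm_nonneg u) hu))) fun n => ?_)
    rw [norm_smul]
    have := norm_inv_nat_le (n + 1)
    have h2 := norm_pow_le' u (Nat.succ_pos n)
    calc _ ≤ (((n + 1 : ℕ) : ℝ) + 1) * ‖u‖ ^ (n + 1) := mul_le_mul this h2 (norm_nonneg _) (by positivity)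
      _ = _ := by push_cast; ring
  rw [ell, sub_sub_cancel, mul_neg, ← hs.tsum_mul_left]
  congr 2; ext n
  rw [mul_smul_comm, pow_succ']

variable (D : R →L[ℚ_[5]] R) (hD : ∀ a b, D (a * b) = a * D b + b * D a)
include hD

lemma D_one : D 1 = 0 := by
  have := hD 1 1
  simp at this
  exact this

lemma D_pow (X : R) (n : ℕ) : D (X ^ (n + 1)) = (n + 1 : ℕ) • (X ^ n * D X) := by
  induction n with
  | zero => simp
  | succ n ih =>
    rw [pow_succ, hD, ih]
    simp only [nsmul_eq_mul]; push_cast; ring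

lemma D_ell {X : R} (hX : ‖1 - X‖ < 1) : X * D (ell X) = D X := by
  have h := ((D.continuous.tendsto _).comp (ell_tendsto hX)).const_mul X
  have h2 := (pow_tendsto hX).mul_const (D X)
  rw [one_mul] at h2
  refine tendsto_nhds_unique h (h2.congr fun N => ?_)
  obtain ⟨q, hq⟩ : ∃ q, 5 ^ N = q + 1 := ⟨5 ^ N - 1, by have := pow_pos (show 0 < 5 by norm_num) N; omega⟩
  have h5 : (5 : ℚ_[5]) ^ N = ((q + 1 : ℕ) : ℚ_[5]) := by exact_mod_cast hq
  have h0 : ((q + 1 : ℕ) : ℚ_[5]) ≠ 0 := by exact_mod_cast Nat.succ_ne_zero q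
  simp only [Function.comp]
  rw [map_smul, map_sub, D_one D hD, sub_zero, hq, D_pow D hD, h5, ← Nat.cast_smul_eq_nsmul ℚ_[5],
    inv_smul_smul₀ h0]
  ring


/-- the series `∑ H_n z^n` -/
noncomputable def Sg (z : R) : R := ∑' n : ℕ, ((harmonic n : ℚ) : ℚ_[5]) • z ^ n

omit hD in
lemma summable_Sg {z : R} (hz : ‖z‖ < 1) :
    Summable (fun n : ℕ => ((harmonic n : ℚ) : ℚ_[5]) • z ^ n) := by
  refine Summable.of_norm_bounded (g := fun n : ℕ => (n : ℝ) ^ 2 * ‖z‖ ^ n)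
    (summable_pow_mul_geometric_of_norm_lt_one 2 (r := ‖z‖) (by simpa using hz)) fun n => ?_
  rcases Nat.eq_zero_or_pos n with rfl | h
  · simp
  · rw [norm_smul]
    exact mul_le_mul (norm_harmonic_le n) (norm_pow_le' z h) (norm_nonneg _) (by positivity)

omit hD in
lemma Sg_eq {z : R} (hz : ‖z‖ < 1) : (1 - z) * Sg z = - ell (1 - z) := by
  have hs := summable_Sg hz
  have h1 : Sg z = ∑' n : ℕ, ((harmonic (n + 1) : ℚ) : ℚ_[5]) • z ^ (n + 1) := by
    rw [Sg, hs.tsum_eq_zero_add]; simp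
  have h2 : z * Sg z = ∑' n : ℕ, ((harmonic n : ℚ) : ℚ_[5]) • z ^ (n + 1) := by
    rw [Sg, ← hs.tsum_mul_left]
    congr 1; ext n
    rw [mul_smul_comm, pow_succ']
  have hs1 := (summable_nat_add_iff 1).2 hs
  have hs2 : Summable (fun n : ℕ => ((harmonic n : ℚ) : ℚ_[5]) • z ^ (n + 1)) := by
    refine (hs.mul_left z).congr fun n => ?_
    rw [mul_smul_comm, pow_succ']
  rw [sub_mul, one_mul, h2, h1, ← hs1.tsum_sub hs2, ell, neg_neg, sub_sub_cancel]
  congr 1; ext n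
  rw [← sub_smul, harmonic_succ]
  push_cast
  rw [add_sub_cancel_left]

variable (J : R →L[ℚ_[5]] ℚ_[5]) (x h : R) (hJ1 : J 1 = 1) (hx : D x = 1)
  (hI : ∀ f, J (D ((x ^ 2 - 5) * f)) = 0) (h2 : 2 * h = 1)

include hJ1 hx hI h2

lemma J_pow (e : R) (w : R) (he : e = x + (x ^ 2 - 5) * w) (n : ℕ) :
    J ((h ^ 2 * (5 - e ^ 2)) ^ n * D e) = 5 ^ n / ((2 * n + 1) * (Nat.centralBinom n : ℚ_[5])) := by
  have hDh : D h = 0 := by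
    have := congrArg D h2
    rw [hD, D_one D hD] at this
    have h22 : D 2 = 0 := by
      rw [← one_add_one_eq_two, map_add, D_one D hD, add_zero]
    rw [h22, mul_zero, add_zero] at this
    calc D h = h * (2 * D h) := by linear_combination (1 - 2 * h) * D h - D h * (1 - 2 * h) - D h * h2
      _ = 0 := by rw [this, mul_zero]
  induction n with
  | zero =>
    have := hI w
    simp [he, hx, hJ1, this]
  | succ n ih =>
    have hz : ∃ v, h ^ 2 * (5 - e ^ 2) = (x ^ 2 - 5) * v := 
      ⟨h ^ 2 * (-1 - 2 * x * w - (x ^ 2 - 5) * w ^ 2), by rw [he]; ring⟩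
    have h5 : D 5 = 0 := by
      have : (5 : R) = 1 + 1 + 1 + 1 + 1 := by norm_num
      rw [this]; simp [D_one D hD]
    set z := h ^ 2 * (5 - e ^ 2) with hzdef
    have hDz : D z = - (h * e * D e) := by
      rw [hzdef, hD, pow_two h, hD, hDh, map_sub, h5, pow_two e, hD]
      linear_combination (-h * e * D e) * h2
    have he2 : e ^ 2 = 5 - 4 * z := by
      rw [hzdef]; linear_combination ((5 - e ^ 2) * (2 * h + 1)) * h2
    obtain ⟨v, hv⟩ := hz
    have h0 : J (D (e * z ^ (n + 1))) = 0 := by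
      have : e * z ^ (n + 1) = (x ^ 2 - 5) * (v * e * z ^ n) := by
        rw [pow_succ, ← mul_assoc]; nth_rewrite 2 [hv]; ring
      rw [this, hI]
    have h1 : D (e * z ^ (n + 1)) = ((2 * n + 3 : ℕ) : ℚ_[5]) • (z ^ (n + 1) * D e)
        - (((5 * (n + 1) : ℕ) : ℚ_[5]) * 2⁻¹) • (z ^ n * D e) := by
      have hh : ∀ a : R, (2 : ℚ_[5])⁻¹ • a = h * a := by
        intro a
        rw [inv_smul_eq_iff₀ (by norm_num), ofNat_smul_eq_nsmul, nsmul_eq_mul]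
        push_cast
        linear_combination (-a) * h2
      rw [hD, D_pow D hD, hDz, mul_smul, hh, Nat.cast_smul_eq_nsmul, Nat.cast_smul_eq_nsmul]
      simp only [nsmul_eq_mul]
      push_cast
      have : e * (((n : R) + 1) * (z ^ n * -(h * e * D e))) = -((n : R) + 1) * z ^ n * h * D e * (5 - 4 * z) := by
        rw [← he2]; ring
      rw [this]
      linear_combination (2 * ((n : R) + 1) * z ^ n * D e * z) * h2
    rw [h1, map_sub, map_smul, map_smul, ih] at h0
    have hc : ((n : ℚ_[5]) + 1) * (Nat.centralBinom (n + 1) : ℚ_[5]) = 2 * (2 * n + 1) * (Nat.centralBinom n : ℚ_[5]) := by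
      exact_mod_cast Nat.succ_mul_centralBinom_succ n
    have c0 : (Nat.centralBinom n : ℚ_[5]) ≠ 0 := by exact_mod_cast Nat.centralBinom_ne_zero n
    have c1 : (Nat.centralBinom (n + 1) : ℚ_[5]) ≠ 0 := by exact_mod_cast Nat.centralBinom_ne_zero (n + 1)
    have c2 : ((2 : ℚ_[5]) * n + 1) ≠ 0 := by exact_mod_cast (by omega : 2 * n + 1 ≠ 0)
    have c3 : ((2 : ℚ_[5]) * n + 3) ≠ 0 := by exact_mod_cast (by omega : 2 * n + 3 ≠ 0)
    have c4 : ((2 : ℚ_[5]) * (n + 1) + 1) ≠ 0 := by exact_mod_cast (by omega : 2 * (n + 1) + 1 ≠ 0)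
    simp only [smul_eq_mul] at h0
    push_cast at h0 ⊢
    rw [eq_div_iff (mul_ne_zero c4 c1)]
    field_simp at h0
    have : J (z ^ (n + 1) * D e) * (2 * n + 3) * (2 * (2 * n + 1) * (Nat.centralBinom n : ℚ_[5])) = 5 ^ (n + 1) * (n + 1) := by
      linear_combination h0
    rw [← hc] at this
    have c5 : ((n : ℚ_[5]) + 1) ≠ 0 := by exact_mod_cast Nat.succ_ne_zero n
    apply mul_right_cancel₀ c5
    linear_combination this

lemma J_Sg (e : R) (w : R) (he : e = x + (x ^ 2 - 5) * w) (hz : ‖h ^ 2 * (5 - e ^ 2)‖ < 1) :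
    HasSum (fun n : ℕ => ((harmonic n : ℚ) : ℚ_[5]) *
      (5 ^ n / ((2 * n + 1) * (Nat.centralBinom n : ℚ_[5])))) (J (Sg (h ^ 2 * (5 - e ^ 2)) * D e)) := by
  have := (((summable_Sg hz).hasSum).mul_right (D e)).mapL J
  rw [← Sg] at this
  convert this using 2 with n
  rw [smul_mul_assoc, map_smul, J_pow D hD J x h hJ1 hx hI h2 e w he n, smul_eq_mul]

variable [NormOneClass R] (hna : ∀ a b : R, ‖a + b‖ ≤ max ‖a‖ ‖b‖) (hx2 : ‖x‖ ≤ 1 / 2)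

omit hD hJ1 hx hI h2 in
include hna in
lemma U_mul {X Y : R} (hX : ‖1 - X‖ < 1) (hY : ‖1 - Y‖ < 1) : ‖1 - X * Y‖ < 1 := by
  have h1 : ‖X‖ ≤ 1 := by
    have := hna 1 (-(1 - X))
    rw [norm_neg, norm_one] at this
    have e : (1 : R) + -(1 - X) = X := by ring
    rw [e] at this
    exact this.trans (max_le le_rfl hX.le)
  have e : 1 - X * Y = (1 - X) + X * (1 - Y) := by ring
  rw [e]
  refine (hna _ _).trans_lt (max_lt hX ?_)
  refine (norm_mul_le _ _).trans_lt ?_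
  calc _ ≤ 1 * ‖1 - Y‖ := by gcongr
    _ < 1 := by rwa [one_mul]

omit hD hJ1 hx hI h2 in
include hna in
lemma ell_mul {X Y : R} (hX : ‖1 - X‖ < 1) (hY : ‖1 - Y‖ < 1) :
    ell (X * Y) = ell X + ell Y := ell_mul' hX hY (U_mul hna hX hY)

omit hD hJ1 hx hI h2 in
include hna in
lemma exists_inv {u : R} (hu : ‖u‖ < 1) : ∃ i : R, (1 - u) * i = 1 ∧ ‖i‖ ≤ 1 := by
  obtain ⟨i, hi⟩ := (isUnit_one_sub_of_norm_lt_one hu).exists_right_inv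
  refine ⟨i, hi, ?_⟩
  have e : i = 1 + u * i := by linear_combination hi
  by_contra hlt
  push Not at hlt
  have h1 := hna 1 (u * i)
  rw [← e, norm_one] at h1
  have h2 := norm_mul_le u i
  have h3 : ‖u‖ * ‖i‖ < ‖i‖ := by nlinarith
  have : max 1 ‖u * i‖ < ‖i‖ := max_lt hlt (h2.trans_lt h3)
  linarith

omit hJ1 hx hI h2 in
lemma D_inv {X i : R} (hi : X * i = 1) : D i = - (i ^ 2 * D X) := by
  have := congrArg D hi
  rw [hD, D_one D hD] at this
  linear_combination i * this - D i * hi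

include hna hx2

theorem abstract_main :
    HasSum (fun n : ℕ => ((harmonic n : ℚ) : ℚ_[5]) *
      (5 ^ n / ((2 * n + 1) * (Nat.centralBinom n : ℚ_[5])))) 0 := by
  have n5 : ‖(5 : R)‖ ≤ 1 / 5 := by
    have : (5 : R) = algebraMap ℚ_[5] R 5 := (map_ofNat _ 5).symm
    rw [this, norm_algebraMap']
    have := Padic.norm_p (p := 5)
    norm_num at this ⊢
    rw [this]
  have nint : ∀ k : ℤ, ‖(k : R)‖ ≤ 1 := by
    intro k
    have : (k : R) = algebraMap ℚ_[5] R k := by simp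
    rw [this, norm_algebraMap']
    exact Padic.norm_int_le_one k
  have nmul : ∀ {a b : R} {r : ℝ}, ‖a‖ ≤ 1 → ‖b‖ ≤ r → ‖a * b‖ ≤ r := by
    intro a b r ha hb
    calc _ ≤ ‖a‖ * ‖b‖ := norm_mul_le _ _
      _ ≤ 1 * ‖b‖ := by gcongr
      _ ≤ r := by rwa [one_mul]
  have nadd : ∀ {a b : R} {r : ℝ}, ‖a‖ ≤ r → ‖b‖ ≤ r → ‖a + b‖ ≤ r :=
    fun ha hb => (hna _ _).trans (max_le ha hb)
  have nsub : ∀ {a b : R} {r : ℝ}, ‖a‖ ≤ r → ‖b‖ ≤ r → ‖a - b‖ ≤ r := by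
    intro a b r ha hb
    rw [sub_eq_add_neg]; exact nadd ha (by rwa [norm_neg])
  have nh : ‖h‖ ≤ 1 := by
    -- h = 3 - 5 h
    have e : h = 3 - 5 * h := by linear_combination 3 * h2
    by_contra hlt
    push Not at hlt
    have h1 := hna 3 (-(5 * h))
    rw [← sub_eq_add_neg, ← e, norm_neg] at h1
    have h3 : ‖(3 : R)‖ ≤ 1 := by exact_mod_cast nint 3
    have h4 := norm_mul_le (5 : R) h
    have : ‖(5 : R) * h‖ < ‖h‖ := by nlinarith
    have : max ‖(3 : R)‖ ‖5 * h‖ < ‖h‖ := max_lt (h3.trans_lt hlt) this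
    linarith
  -- t = 1/3
  obtain ⟨t, ht, nt⟩ : ∃ t : R, 3 * t = 1 ∧ ‖t‖ ≤ 1 := by
    refine ⟨2 - 5 * algebraMap ℚ_[5] R (3⁻¹), ?_, ?_⟩
    · have : (3 : R) * algebraMap ℚ_[5] R (3⁻¹) = 1 := by
        have e : (3 : R) = algebraMap ℚ_[5] R 3 := (map_ofNat _ 3).symm
        rw [e, ← map_mul]; norm_num
      linear_combination (-5) * this
    · refine nsub (by exact_mod_cast nint 2) ?_
      rw [mul_comm]
      refine nmul ?_ (n5.trans (by norm_num))
      rw [norm_algebraMap', norm_inv]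
      have : ‖(3 : ℚ_[5])‖ = 1 := by
        have := (Padic.norm_natCast_eq_one_iff (p := 5) (n := 3)).2 (by norm_num)
        exact_mod_cast this
      rw [this]; norm_num
  have n12 : ‖(5 : R)‖ ≤ 1 / 2 := n5.trans (by norm_num)
  -- generic smallness
  have nz : ∀ e : R, ‖e‖ ≤ 1 / 2 → ‖h ^ 2 * (5 - e ^ 2)‖ < 1 := by
    intro e he
    have : ‖h ^ 2 * (5 - e ^ 2)‖ ≤ 1 / 2 := by
      rw [pow_two, pow_two]
      refine nmul (nmul nh nh) (nsub n12 (nmul (he.trans (by norm_num)) he))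
    linarith
  -- the three inverses
  obtain ⟨i1, hi1, ni1⟩ := exists_inv hna (show ‖x‖ < 1 by linarith)
  obtain ⟨i3, hi3', ni3⟩ := exists_inv hna (show ‖-x‖ < 1 by rw [norm_neg]; linarith)
  have ntx : ‖t * x‖ ≤ 1 / 2 := nmul nt hx2
  obtain ⟨i2, hi2, ni2⟩ := exists_inv hna (show ‖t * x‖ < 1 by linarith)
  have hi3 : (1 + x) * i3 = 1 := by linear_combination hi3'
  have hj : (3 - x) * (t * i2) = 1 := alg_j ht hi2
  set j := t * i2 with hjdef
  have nj : ‖j‖ ≤ 1 := nmul nt ni2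
  -- derivatives
  have D1 : D 1 = 0 := D_one D hD
  have Dint : ∀ k : ℤ, D (k : R) = 0 := by
    intro k
    have : (k : R) = algebraMap ℚ_[5] R k := by simp
    rw [this, Algebra.algebraMap_eq_smul_one, map_smul, D1, smul_zero]
  have D3 : D 3 = 0 := by exact_mod_cast Dint 3
  have Di1 : D i1 = i1 ^ 2 := by
    rw [D_inv D hD hi1, map_sub, D1, hx]; ring
  have Di3 : D i3 = - i3 ^ 2 := by
    rw [D_inv D hD hi3, map_add, D1, hx]; ring
  have Dj : D j = j ^ 2 := by
    rw [D_inv D hD hj, map_sub, D3, hx]; ring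
  -- the substitutions
  set e1 : R := -(4 * i1) - 1 with he1
  set e3 : R := 8 * (j * i3) - 1 with he3
  have E1 : e1 = x + (x ^ 2 - 5) * i1 := alg_e1 hi1
  have E3 : e3 = x + (x ^ 2 - 5) * ((x - 1) * j * i3) := alg_e3 hj hi3
  have E0 : x = x + (x ^ 2 - 5) * 0 := by ring
  have De1 : D e1 = -(4 * i1 ^ 2) := by
    have D4 : D 4 = 0 := by exact_mod_cast Dint 4
    rw [he1, map_sub, map_neg, hD, D4, D1, Di1]; ring
  have De3 : D e3 = 16 * (x - 1) * j ^ 2 * i3 ^ 2 := by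
    have D8 : D 8 = 0 := by exact_mod_cast Dint 8
    rw [he3, map_sub, hD, D8, D1, hD, Di3, Dj]
    linear_combination alg_De3 hj hi3
  have nw : ∀ w : R, ‖w‖ ≤ 1 → ‖x + (x ^ 2 - 5) * w‖ ≤ 1 / 2 := by
    intro w hw
    refine nadd hx2 ?_
    rw [mul_comm, pow_two]
    exact nmul hw (nsub (nmul (hx2.trans (by norm_num)) hx2) n12)
  have nx1 : ‖x - 1‖ ≤ 1 := nsub (hx2.trans (by norm_num)) norm_one.le
  have ne1 : ‖e1‖ ≤ 1 / 2 := by rw [E1]; exact nw _ ni1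
  have ne3 : ‖e3‖ ≤ 1 / 2 := by
    rw [E3]; exact nw _ (nmul (nmul nx1 nj) ni3)
  have S0 := J_Sg D hD J x h hJ1 hx hI h2 x 0 E0 (nz x hx2)
  have S1 := J_Sg D hD J x h hJ1 hx hI h2 e1 _ E1 (nz e1 ne1)
  have S3 := J_Sg D hD J x h hJ1 hx hI h2 e3 _ E3 (nz e3 ne3)
  have Q0 := Sg_eq (nz x hx2)
  have Q1 := Sg_eq (nz e1 ne1)
  have Q3 := Sg_eq (nz e3 ne3)
  have nz0 := nz x hx2
  have nz1 := nz e1 ne1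
  have nz3 := nz e3 ne3
  have sq0 : h ^ 2 * (5 - x ^ 2) = (x ^ 2 - 5) * (-h ^ 2) := by ring
  have sq1 : ∃ v, h ^ 2 * (5 - e1 ^ 2) = (x ^ 2 - 5) * v :=
    ⟨h ^ 2 * (-1 - 2 * x * i1 - (x ^ 2 - 5) * i1 ^ 2), by rw [E1]; ring⟩
  generalize hz0 : h ^ 2 * (5 - x ^ 2) = z0 at *
  generalize hz1 : h ^ 2 * (5 - e1 ^ 2) = z1 at *
  generalize hz3 : h ^ 2 * (5 - e3 ^ 2) = z3 at *
  have h4 : 4 * h ^ 2 = 1 := by linear_combination (2 * h + 1) * h2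
  -- values of 1 - z
  have V0 : (-4) * (1 - z0) = (1 - x) * (1 + x) := by
    rw [← hz0]; linear_combination (5 - x ^ 2) * h4
  have W1 : 1 - z1 = 2 * (3 - x) * i1 ^ 2 := by
    rw [← hz1, he1]
    exact alg_W1 hi1 h4
  have W3 : 1 - z3 = 4 * j ^ 2 * i3 ^ 2 * (1 - x) ^ 2 := by
    rw [← hz3, he3]
    exact alg_W3 hj hi3 h4
  have V1 : (1 - z1) * ((1 - x) * (1 - x)) = 6 * (1 - t * x) := by
    rw [W1]
    exact alg_V1 hi1 ht
  have V3 : (1 - z3) * ((6 * 6) * (((1 - t * x) * (1 - t * x)) * ((1 + x) * (1 + x)))) =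
      ((-4) * (-4)) * ((1 - x) * (1 - x)) := by
    rw [W3]
    exact alg_V3 hj hi3 ht
  -- logs
  have u1 : ‖1 - (1 - x)‖ < 1 := by rw [sub_sub_cancel]; linarith
  have u2 : ‖1 - (1 - t * x)‖ < 1 := by rw [sub_sub_cancel]; linarith
  have u3 : ‖1 - (1 + x)‖ < 1 := by rw [sub_add_cancel_left, norm_neg]; linarith
  have um : ‖1 - (-4 : R)‖ < 1 := by norm_num; linarith
  have us : ‖1 - (6 : R)‖ < 1 := by
    rw [show (1 : R) - 6 = -5 by norm_num, norm_neg]; linarith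
  have uz0 : ‖1 - (1 - z0)‖ < 1 := by rwa [sub_sub_cancel]
  have uz1 : ‖1 - (1 - z1)‖ < 1 := by rwa [sub_sub_cancel]
  have uz3 : ‖1 - (1 - z3)‖ < 1 := by rwa [sub_sub_cancel]
  have L0 := congrArg ell V0
  rw [ell_mul hna um uz0, ell_mul hna u1 u3] at L0
  have L1 := congrArg ell V1
  rw [ell_mul hna uz1 (U_mul hna u1 u1), ell_mul hna u1 u1, ell_mul hna us u2] at L1
  have L3 := congrArg ell V3
  rw [ell_mul hna uz3 (U_mul hna (U_mul hna us us) (U_mul hna (U_mul hna u2 u2) (U_mul hna u3 u3))),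
    ell_mul hna (U_mul hna us us) (U_mul hna (U_mul hna u2 u2) (U_mul hna u3 u3)),
    ell_mul hna us us, ell_mul hna (U_mul hna u2 u2) (U_mul hna u3 u3), ell_mul hna u2 u2,
    ell_mul hna u3 u3, ell_mul hna (U_mul hna um um) (U_mul hna u1 u1), ell_mul hna um um,
    ell_mul hna u1 u1] at L3
  have Dl1 := D_ell D hD u1
  have Dl2 := D_ell D hD u2
  have Dl3 := D_ell D hD u3
  have Dm := D_ell D hD um
  have Ds := D_ell D hD us
  obtain ⟨w0, hw0⟩ := ell_ideal nz0
  obtain ⟨w1, hw1⟩ := ell_ideal nz1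
  generalize ell (1 - x) = l1 at *
  generalize ell (1 - t * x) = l2 at *
  generalize ell (1 + x) = l3 at *
  generalize ell (-4 : R) = m at *
  generalize ell (6 : R) = s at *
  generalize ell (1 - z0) = y0 at *
  generalize ell (1 - z1) = y1 at *
  generalize ell (1 - z3) = y3 at *
  have D4 : D (-4) = 0 := by exact_mod_cast Dint (-4)
  have D6 : D 6 = 0 := by exact_mod_cast Dint 6
  have Dt : D t = 0 := by
    rw [D_inv D hD ht, D3]; simp
  rw [map_sub, D1, hx] at Dl1
  rw [map_sub, D1, hD, hx, Dt] at Dl2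
  rw [map_add, D1, hx] at Dl3
  have Dl1 : D l1 = - i1 := by linear_combination i1 * Dl1 - D l1 * hi1
  have Dl3 : D l3 = i3 := by linear_combination i3 * Dl3 - D l3 * hi3
  have Dl2 : D l2 = - j := by
    rw [hjdef]; linear_combination i2 * Dl2 - D l2 * hi2
  have Dm : D m = 0 := by
    linear_combination (-h ^ 2) * (Dm.trans D4) - D m * h4
  have Ds : D s = 0 := by
    linear_combination (h * t) * (Ds.trans D6) - D s * (h2 + 2 * h * ht)
  -- the three forms
  have F0 : Sg z0 * D x = 2 * y0 * (i1 + i3) := by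
    rw [hx]; exact alg_F0 hi1 hi3 V0 Q0
  have F1 : Sg z1 * D e1 = 2 * y1 * j := by
    rw [De1]; exact alg_F1 hj W1 Q1
  have F3 : Sg z3 * D e3 = 4 * y3 * i1 := by
    rw [De3]; exact alg_F3 hi1 W3 Q3
  have hy0 : y0 = l1 + l3 - m := by linear_combination L0
  have hy1 : y1 = s + l2 - 2 * l1 := by linear_combination L1
  have hy3 : y3 = 2 * m + 2 * l1 - 2 * s - 2 * l2 - 2 * l3 := by linear_combination L3
  -- the primitive
  have key : 2 * (Sg z0 * D x) + 2 * (Sg z1 * D e1) + Sg z3 * D e3 =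
      D (2 * (l3 * l3) - 6 * (l1 * l1) - 2 * (l2 * l2) + 4 * (l1 * l3) + 8 * (l1 * l2)
        - 4 * (m * (l1 + l3)) - 4 * (s * l2) + 8 * (s * l1)) := by
    have Dk : ∀ (k : ℤ) (a : R), D ((k : R) * a) = k * D a := by
      intro k a; rw [hD, Dint, mul_zero, add_zero]
    have d2 : ∀ a : R, D (2 * a) = 2 * D a := fun a => by exact_mod_cast Dk 2 a
    have d4 : ∀ a : R, D (4 * a) = 4 * D a := fun a => by exact_mod_cast Dk 4 a
    have d6 : ∀ a : R, D (6 * a) = 6 * D a := fun a => by exact_mod_cast Dk 6 a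
    have d8 : ∀ a : R, D (8 * a) = 8 * D a := fun a => by exact_mod_cast Dk 8 a
    rw [F0, F1, F3, hy0, hy1, hy3]
    simp only [map_add, map_sub, d2, d4, d6, d8]
    simp only [hD, map_add, Dl1, Dl2, Dl3, Dm, Ds]
    ring
  have hmod : ∃ v c, D c = 0 ∧ 2 * (l3 * l3) - 6 * (l1 * l1) - 2 * (l2 * l2) + 4 * (l1 * l3) + 8 * (l1 * l2)
        - 4 * (m * (l1 + l3)) - 4 * (s * l2) + 8 * (s * l1) = (x ^ 2 - 5) * v + c := by
    obtain ⟨v1, hv1⟩ := sq1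
    have a3 : l3 = m - l1 + (x ^ 2 - 5) * (-h ^ 2 * w0) := by
      linear_combination hw0 - hy0 + w0 * sq0
    have a2 : l2 = 2 * l1 - s + (x ^ 2 - 5) * (v1 * w1) := by
      linear_combination hw1 - hy1 + w1 * hv1
    generalize -h ^ 2 * w0 = p at a3
    generalize v1 * w1 = q at a2
    refine ⟨2 * (x ^ 2 - 5) * (p ^ 2 - q ^ 2), (-2) * (m * m) + 2 * (s * s), ?_, ?_⟩
    · have e1 : (-2) * (m * m) + 2 * (s * s) = -(m * m) - m * m + (s * s + s * s) := by ring
      rw [e1]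
      simp only [map_add, map_sub, map_neg, hD, Dm, Ds]
      ring
    · rw [a3, a2]
      ring
  obtain ⟨v, c, hc, hv⟩ := hmod
  rw [hv] at key
  have hJ := congrArg J key
  rw [map_add D, hc, add_zero, hI] at hJ
  have e2 : ∀ a : R, (2 : R) * a = (2 : ℚ_[5]) • a := by
    intro a; rw [ofNat_smul_eq_nsmul, nsmul_eq_mul]; push_cast; rfl
  rw [map_add, map_add, e2, e2, map_smul, map_smul, S1.unique S0, S3.unique S0] at hJ
  have : J (Sg z0 * D x) = 0 := by
    simp only [smul_eq_mul] at hJ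
    linear_combination hJ / 5
  rwa [this] at S0

end
end B2

namespace B2

/-- The polynomial ring, to be normed by the Gauss norm of radius `1/2`. -/
abbrev P : Type := Polynomial ℚ_[5]

/-- The Gauss norm of radius `1/2`. -/
noncomputable def gn (p : Polynomial ℚ_[5]) : ℝ :=
  p.gaussNorm (NormedField.toAbsoluteValue ℚ_[5]) (1 / 2)

theorem na5 : IsNonarchimedean (NormedField.toAbsoluteValue ℚ_[5]) := fun a b =>
  Padic.nonarchimedean a b

theorem gn_abs : IsAbsoluteValue gn :=
  Polynomial.gaussNorm_isAbsoluteValue na5 (by norm_num)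

theorem gn_na (p q : Polynomial ℚ_[5]) : gn (p + q) ≤ max (gn p) (gn q) :=
  Polynomial.isNonarchimedean_gaussNorm _ na5 (by norm_num) p q

theorem gn_monomial (n : ℕ) (r : ℚ_[5]) :
    gn (Polynomial.monomial n r) = ‖r‖ * (1 / 2) ^ n :=
  Polynomial.gaussNorm_monomial _ _ n r

theorem le_gn (p : Polynomial ℚ_[5]) (i : ℕ) : ‖p.coeff i‖ * (1 / 2) ^ i ≤ gn p :=
  Polynomial.le_gaussNorm (NormedField.toAbsoluteValue ℚ_[5]) p (by norm_num) i

theorem gn_le (p : Polynomial ℚ_[5]) (B : ℝ) (h : ∀ i, ‖p.coeff i‖ * (1 / 2) ^ i ≤ B) :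
    gn p ≤ B := by
  obtain ⟨i, hi⟩ := Polynomial.exists_eq_gaussNorm (NormedField.toAbsoluteValue ℚ_[5]) (1 / 2) p
  unfold gn
  rw [hi]
  exact h i

/-- The Gauss norm as an absolute value. -/
noncomputable def va : AbsoluteValue (Polynomial ℚ_[5]) ℝ :=
  haveI := gn_abs
  IsAbsoluteValue.toAbsoluteValue gn

noncomputable instance : NormedCommRing P :=
  { AbsoluteValue.toNormedRing va with
    mul_comm := fun a b => mul_comm (G := Polynomial ℚ_[5]) a b }

theorem norm_P (p : P) : ‖p‖ = gn p := rfl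

noncomputable instance : NormedAlgebra ℚ_[5] P where
  toAlgebra := Polynomial.algebraOfAlgebra
  norm_smul_le r p := by
    rw [Algebra.smul_def, norm_P, norm_P]
    have := gn_abs.abv_mul' (Polynomial.C r) p
    refine this.le.trans ?_
    rw [← Polynomial.monomial_zero_left, gn_monomial]
    simp

/-- Derivative, as a continuous linear map on `P`. -/
noncomputable def DP : P →L[ℚ_[5]] P :=
  LinearMap.mkContinuous (Polynomial.derivative (R := ℚ_[5]) : P →ₗ[ℚ_[5]] P) 2 (by
    intro p
    rw [norm_P, norm_P]
    refine gn_le _ _ fun i => ?_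
    change ‖(Polynomial.derivative (p : Polynomial ℚ_[5])).coeff i‖ * _ ≤ _
    rw [Polynomial.coeff_derivative, norm_mul]
    have h1 : ‖((i : ℚ_[5]) + 1)‖ ≤ 1 := by
      have := Padic.norm_int_le_one (p := 5) ((i : ℤ) + 1)
      push_cast at this
      exact this
    have h2 := le_gn p (i + 1)
    have h3 : 0 ≤ ‖Polynomial.coeff (p : Polynomial ℚ_[5]) (i + 1)‖ * (1 / 2) ^ i := by positivity
    rw [pow_succ] at h2
    nlinarith)

/-- Moments of the functional. -/
noncomputable def mom (n : ℕ) : ℚ_[5] := if Even n then 5 ^ (n / 2) / (n + 1) else 0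

theorem mom_bound (n : ℕ) : ‖mom n‖ ≤ 8 * (1 / 2) ^ n := by
  unfold mom
  split_ifs with h
  · obtain ⟨m, rfl⟩ := h
    have e : (m + m) / 2 = m := by omega
    rw [e, norm_div, norm_pow]
    have h5 : ‖(5 : ℚ_[5])‖ = 1 / 5 := by
      have := Padic.norm_p (p := 5)
      push_cast at this
      rw [this]; norm_num
    rw [h5]
    have hl : (1 : ℝ) / (m + m + 1 : ℝ) ≤ ‖(((m + m : ℕ) : ℚ_[5]) + 1)‖ := by
      have := norm_inv_nat_le (m + m)
      have hne : (((m + m : ℕ) : ℚ_[5]) + 1) ≠ 0 := by exact_mod_cast Nat.succ_ne_zero (m + m)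
      have hn := norm_pos_iff.2 hne
      rw [norm_inv, inv_le_comm₀ hn (by positivity)] at this
      rw [one_div]
      exact_mod_cast this
    have hpos : (0 : ℝ) < 1 / (m + m + 1 : ℝ) := by positivity
    rw [div_le_iff₀ (hpos.trans_le hl)]
    have hb := one_add_mul_le_pow (a := (1 / 4 : ℝ)) (by norm_num) m
    have e2 : (1 / 5 : ℝ) ^ m * (5 / 4) ^ m = (1 / 2) ^ (m + m) := by
      rw [← mul_pow, ← two_mul, pow_mul]; norm_num
    have e3 : (8 : ℝ) * (1 / 2) ^ (m + m) * (1 / (m + m + 1 : ℝ)) ≤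
        8 * (1 / 2) ^ (m + m) * ‖(((m + m : ℕ) : ℚ_[5]) + 1)‖ := by gcongr
    refine le_trans ?_ e3
    rw [← e2, mul_one_div, le_div_iff₀ (by positivity)]
    have : (0 : ℝ) ≤ (1 / 5) ^ m := by positivity
    have : (0 : ℝ) ≤ m := by positivity
    nlinarith
  · simp

/-- The functional on polynomials. -/
noncomputable def JL : Polynomial ℚ_[5] →ₗ[ℚ_[5]] ℚ_[5] :=
  Polynomial.lsum fun n => LinearMap.mulRight ℚ_[5] (mom n)

theorem JL_monomial (n : ℕ) (r : ℚ_[5]) : JL (Polynomial.monomial n r) = r * mom n := by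
  simp [JL, Polynomial.lsum_apply, Polynomial.sum_monomial_index]

theorem JL_bound (p : Polynomial ℚ_[5]) : ‖JL p‖ ≤ 8 * gn p := by
  have hp : JL p = ∑ n ∈ p.support, p.coeff n * mom n := by
    simp [JL, Polynomial.lsum_apply, Polynomial.sum_def]
  rw [hp]
  have h0 : 0 ≤ gn p := gn_abs.abv_nonneg' p
  refine IsUltrametricDist.norm_sum_le_of_forall_le_of_nonneg (by positivity) fun n _ => ?_
  rw [norm_mul]
  calc _ ≤ ‖p.coeff n‖ * (8 * (1 / 2) ^ n) := by gcongr; exact mom_bound n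
    _ = 8 * (‖p.coeff n‖ * (1 / 2) ^ n) := by ring
    _ ≤ _ := by gcongr; exact le_gn p n

theorem JL_D (f : Polynomial ℚ_[5]) :
    JL (Polynomial.derivative ((Polynomial.X ^ 2 - 5) * f)) = 0 := by
  induction f using Polynomial.induction_on' with
  | add p q hp hq => rw [mul_add, map_add, map_add, hp, hq, add_zero]
  | monomial n r =>
    have e : (Polynomial.X ^ 2 - 5) * Polynomial.monomial n r =
        Polynomial.monomial (n + 2) r - Polynomial.monomial n (5 * r) := by
      rw [sub_mul, Polynomial.X_pow_mul_monomial]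
      congr 1
      have : (5 : Polynomial ℚ_[5]) = Polynomial.C 5 := rfl
      rw [this, Polynomial.C_mul_monomial]
    rw [e, map_sub, map_sub, Polynomial.derivative_monomial, Polynomial.derivative_monomial,
      JL_monomial, JL_monomial]
    rcases n with _ | n
    · simp [mom]
    · simp only [mom, Nat.add_sub_cancel]
      have e1 : n + 1 + 2 - 1 = n + 2 := by omega
      rw [e1]
      by_cases hn : Even n
      · have : Even (n + 2) := by simpa [Nat.even_add] using hn
        have c1 : ((n : ℚ_[5]) + 1) ≠ 0 := by exact_mod_cast Nat.succ_ne_zero n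
        have c2 : ((n : ℚ_[5]) + 2 + 1) ≠ 0 := by exact_mod_cast Nat.succ_ne_zero (n + 2)
        have e2 : (n + 2) / 2 = n / 2 + 1 := by omega
        rw [if_pos hn, if_pos this, e2]
        push_cast
        field_simp
        ring
      · have : ¬ Even (n + 2) := by simpa [Nat.even_add] using hn
        rw [if_neg hn, if_neg this]; simp

/-- The functional on `P`. -/
noncomputable def JP : P →L[ℚ_[5]] ℚ_[5] :=
  LinearMap.mkContinuous (JL : P →ₗ[ℚ_[5]] ℚ_[5]) 8 JL_bound

/-- The Banach algebra. -/
abbrev R5 := UniformSpace.Completion P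

/-- The variable. -/
noncomputable def xP : P := (Polynomial.X : Polynomial ℚ_[5])

noncomputable def D5 : R5 →L[ℚ_[5]] R5 := DP.completion
noncomputable def J5 : R5 →L[ℚ_[5]] ℚ_[5] := JP.fromCompletion

theorem D5_coe (p : P) : D5 (p : R5) = ((DP p : P) : R5) := DP.completion_apply_coe p
theorem J5_coe (p : P) : J5 (p : R5) = JP p := JP.fromCompletion_apply_coe p

theorem DP_mul (a b : P) : DP (a * b) = a * DP b + b * DP a := by
  have := Polynomial.derivative_mul (f := (a : Polynomial ℚ_[5])) (g := b)
  change Polynomial.derivative (R := ℚ_[5]) ((a : Polynomial ℚ_[5]) * b) = _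
  rw [this, add_comm, mul_comm (Polynomial.derivative (R := ℚ_[5]) a)]
  rfl

theorem norm_P_one : ‖(1 : P)‖ = 1 := by
  rw [norm_P]
  exact (congrArg gn Polynomial.monomial_zero_one.symm).trans (by rw [gn_monomial]; simp)

theorem five_coe : (5 : R5) = ((5 : P) : R5) := by
  exact (map_ofNat (UniformSpace.Completion.coeRingHom (α := P)) 5).symm

instance : NormOneClass R5 where
  norm_one := by
    rw [← UniformSpace.Completion.coe_one, UniformSpace.Completion.norm_coe, norm_P_one]

theorem concrete :
    HasSum (fun n : ℕ => ((harmonic n : ℚ) : ℚ_[5]) *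
      (5 ^ n / ((2 * n + 1) * (Nat.centralBinom n : ℚ_[5])))) 0 := by
  refine abstract_main D5 ?_ J5 ((xP : P) : R5) (algebraMap ℚ_[5] R5 (1 / 2)) ?_ ?_ ?_ ?_ ?_ ?_
  · intro a b
    induction a, b using UniformSpace.Completion.induction_on₂ with
    | hp => exact isClosed_eq (by fun_prop) (by fun_prop)
    | ih a b =>
      rw [← UniformSpace.Completion.coe_mul, D5_coe, D5_coe, D5_coe, DP_mul,
        UniformSpace.Completion.coe_add, UniformSpace.Completion.coe_mul,
        UniformSpace.Completion.coe_mul]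
  · rw [← UniformSpace.Completion.coe_one, J5_coe]
    change JL 1 = 1
    rw [← Polynomial.monomial_zero_one, JL_monomial]
    simp [mom]
  · rw [D5_coe, ← UniformSpace.Completion.coe_one]
    congr 1
    exact Polynomial.derivative_X
  · intro f
    induction f using UniformSpace.Completion.induction_on with
    | hp => exact isClosed_eq (by fun_prop) (by fun_prop)
    | ih f =>
      rw [five_coe, pow_two, ← UniformSpace.Completion.coe_mul, ← UniformSpace.Completion.coe_sub,
        ← UniformSpace.Completion.coe_mul, D5_coe, J5_coe, ← pow_two]
      exact JL_D f
  · have : (2 : R5) = algebraMap ℚ_[5] R5 2 := (map_ofNat _ 2).symm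
    rw [this, ← map_mul]
    norm_num
  · intro a b
    induction a, b using UniformSpace.Completion.induction_on₂ with
    | hp => exact isClosed_le (by fun_prop) (by fun_prop)
    | ih a b =>
      rw [← UniformSpace.Completion.coe_add]
      simp only [UniformSpace.Completion.norm_coe]
      exact gn_na a b
  · rw [UniformSpace.Completion.norm_coe, norm_P]
    exact ((congrArg gn Polynomial.monomial_one_one_eq_X.symm).trans (gn_monomial 1 1)).le.trans
      (by simp)

end B2

/-- In `ℚ₅`, the series `b₂(-5) = ∑_{k≥2} (-1)^{k-1}(-5)^{k-1} H_{k-1}/(k · C(2k,k))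
= ∑_{k≥2} 5^{k-1} H_{k-1}/(k · C(2k,k))` converges and equals `0`
(indexed below by `k = j + 2`). -/
theorem stmt_17 :
    Summable (fun j : ℕ => (5 : ℚ_[5]) ^ (j + 1) * ((harmonic (j + 1) : ℚ) : ℚ_[5]) /
        ((j + 2 : ℚ_[5]) * (Nat.choose (2 * (j + 2)) (j + 2) : ℚ_[5]))) ∧
      ∑' j : ℕ, (5 : ℚ_[5]) ^ (j + 1) * ((harmonic (j + 1) : ℚ) : ℚ_[5]) /
        ((j + 2 : ℚ_[5]) * (Nat.choose (2 * (j + 2)) (j + 2) : ℚ_[5])) = 0 := by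
  have h := B2.concrete
  rw [← hasSum_nat_add_iff' 1] at h
  have h' := h.mul_left (1 / 2)
  have key : HasSum (fun j : ℕ => (5 : ℚ_[5]) ^ (j + 1) * ((harmonic (j + 1) : ℚ) : ℚ_[5]) /
        ((j + 2 : ℚ_[5]) * (Nat.choose (2 * (j + 2)) (j + 2) : ℚ_[5]))) 0 := by
    have z : (1 / 2 : ℚ_[5]) * (0 - ∑ i ∈ Finset.range 1, ((harmonic i : ℚ) : ℚ_[5]) *
        (5 ^ i / ((2 * i + 1) * (Nat.centralBinom i : ℚ_[5])))) = 0 := by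
      simp
    rw [z] at h'
    refine h'.congr_fun ?_
    intro j
    have e := Nat.succ_mul_centralBinom_succ (j + 1)
    have e' : ((j : ℚ_[5]) + 2) * (Nat.choose (2 * (j + 2)) (j + 2) : ℚ_[5]) =
        2 * ((2 * ((j + 1 : ℕ) : ℚ_[5]) + 1) * (Nat.centralBinom (j + 1) : ℚ_[5])) := by
      rw [← Nat.centralBinom_eq_two_mul_choose, ← mul_assoc]
      exact_mod_cast e
    rw [e']
    have c1 : (Nat.centralBinom (j + 1) : ℚ_[5]) ≠ 0 := by
      exact_mod_cast Nat.centralBinom_ne_zero _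
    have c2 : (2 * ((j + 1 : ℕ) : ℚ_[5]) + 1) ≠ 0 := by
      exact_mod_cast Nat.succ_ne_zero (2 * (j + 1))
    field_simp
  exact ⟨key.summable, key.tsum_eq⟩
end
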